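/- Entropy bounded below via the nilradius (Corollary 1.2(ii)): For all real P0, r0, δ > 0 there exists a constant C0 > 0, depending only on P0, r0 and δ, such that for every δ-hyperbolic GCB-space (X,σ) which is P0-packed at scale r0 and every non-elementary, discrete group Γ of σ-isometries of X, the nilradius nilrad(Γ,X) is finite and positive, and the entropy of the action satisfies Ent(Γ,X) ≥ C0 · nilrad(Γ,X)^{−1}. -/

import Mathlib

open Metric Filter

/-- Four-points condition for `δ`-hyperbolicity. -/
def IsDeltaHyperbolic (X : Type*) [MetricSpace X] (δ : ℝ) : Prop :=
  ∀ x y z w : X,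
    dist x y + dist z w ≤ max (dist x z + dist y w) (dist x w + dist y z) + 2 * δ

/-- `X` is `P₀`-packed at scale `r₀`: any subset of a closed ball of radius `3r₀` whose
points are pairwise at distance `> 2r₀` has cardinality at most `P₀`. -/
def IsPacked (X : Type*) [MetricSpace X] (P₀ r₀ : ℝ) : Prop :=
  ∀ x : X, ∀ S : Finset X, (↑S ⊆ closedBall x (3 * r₀)) →
    (∀ a ∈ S, ∀ b ∈ S, a ≠ b → 2 * r₀ < dist a b) → (S.card : ℝ) ≤ P₀

/-- A geodesically complete, convex, consistent, reversible geodesic bicombing on `X`.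
Together with completeness of `X` this is the notion of GCB-space. -/
structure IsGCB {X : Type*} [MetricSpace X] (σ : X → X → ℝ → X) : Prop where
  source : ∀ x y : X, σ x y 0 = x
  target : ∀ x y : X, σ x y 1 = y
  geodesic : ∀ x y : X, ∀ t ∈ Set.Icc (0:ℝ) 1, ∀ t' ∈ Set.Icc (0:ℝ) 1,
    dist (σ x y t) (σ x y t') = |t - t'| * dist x y
  convex : ∀ x y x' y' : X,
    ConvexOn ℝ (Set.Icc (0:ℝ) 1) fun t => dist (σ x y t) (σ x' y' t)
  consistent : ∀ x y : X, ∀ s t l : ℝ, 0 ≤ s → s ≤ t → t ≤ 1 → l ∈ Set.Icc (0:ℝ) 1 →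
    σ (σ x y s) (σ x y t) l = σ x y ((1 - l) * s + l * t)
  reversible : ∀ x y : X, ∀ t ∈ Set.Icc (0:ℝ) 1, σ x y t = σ y x (1 - t)
  geodComplete : ∀ x y : X, ∃ γ : ℝ → X, Isometry γ ∧
    (∀ s t : ℝ, s ≤ t → ∀ l ∈ Set.Icc (0:ℝ) 1, σ (γ s) (γ t) l = γ (s + l * (t - s))) ∧
    (∀ t ∈ Set.Icc (0:ℝ) 1, σ x y t = γ (t * dist x y))

/-- `g` is a `σ`-isometry: a surjective isometry preserving the bicombing `σ`. -/
def IsSigmaIsometry {X : Type*} [MetricSpace X] (σ : X → X → ℝ → X) (g : X ≃ᵢ X) : Prop :=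
  ∀ x y : X, ∀ t ∈ Set.Icc (0:ℝ) 1, g (σ x y t) = σ (g x) (g y) t

/-- A group of isometries is discrete if for every `x` and `R` only finitely many of its
elements displace `x` at most `R`. -/
def IsDiscreteSubgroup {X : Type*} [MetricSpace X] (Γ : Subgroup (X ≃ᵢ X)) : Prop :=
  ∀ x : X, ∀ R : ℝ, {g : X ≃ᵢ X | g ∈ Γ ∧ dist x (g x) ≤ R}.Finite

/-- A group is virtually nilpotent if it has a nilpotent subgroup of finite index. -/
def IsVirtuallyNilpotent (G : Type*) [Group G] : Prop :=
  ∃ H : Subgroup G, H.FiniteIndex ∧ Group.IsNilpotent H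

/-- `Γ` is non-elementary: it contains two elements generating a subgroup that is not
virtually nilpotent. -/
def IsNonElementary {X : Type*} [MetricSpace X] (Γ : Subgroup (X ≃ᵢ X)) : Prop :=
  ∃ a b : X ≃ᵢ X, a ∈ Γ ∧ b ∈ Γ ∧
    ¬ IsVirtuallyNilpotent ↥(Subgroup.closure ({a, b} : Set (X ≃ᵢ X)))

/-- An isometry is non-elliptic if its orbits are unbounded. -/
def IsNonElliptic {X : Type*} [MetricSpace X] (g : X ≃ᵢ X) : Prop :=
  ∀ x : X, ¬ Bornology.IsBounded (Set.range fun n : ℤ => (g ^ n) x)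

/-- The `r`-almost stabilizer `Γ_r(x)`, generated by the elements of `Γ` displacing `x`
at most `r`. -/
def almostStabilizer {X : Type*} [MetricSpace X] (Γ : Subgroup (X ≃ᵢ X)) (r : ℝ) (x : X) :
    Subgroup (X ≃ᵢ X) :=
  Subgroup.closure {g : X ≃ᵢ X | g ∈ Γ ∧ dist x (g x) ≤ r}

/-- The nilpotence radius of `Γ` at `x`. -/
noncomputable def nilrad {X : Type*} [MetricSpace X] (Γ : Subgroup (X ≃ᵢ X)) (x : X) : ℝ :=
  sSup {r : ℝ | 0 ≤ r ∧ IsVirtuallyNilpotent ↥(almostStabilizer Γ r x)}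

/-- The Margulis domain `M_ε(g)`. -/
def margulisDomain {X : Type*} [MetricSpace X] (g : X ≃ᵢ X) (ε : ℝ) : Set X :=
  {x : X | dist x (g x) ≤ ε}

/-- The generalized Margulis domain `ℳ_ε(g) = ⋃_{i ≠ 0} M_ε(gⁱ)`. -/
def genMargulisDomain {X : Type*} [MetricSpace X] (g : X ≃ᵢ X) (ε : ℝ) : Set X :=
  ⋃ i ∈ {i : ℤ | i ≠ 0}, margulisDomain (g ^ i) ε

/-- `f` parameterizes a geodesic segment from `x` to `y` on `[0, dist x y]`. -/
def IsGeodesicFrom {X : Type*} [MetricSpace X] (f : ℝ → X) (x y : X) : Prop :=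
  f 0 = x ∧ f (dist x y) = y ∧
    ∀ s ∈ Set.Icc 0 (dist x y), ∀ t ∈ Set.Icc 0 (dist x y), dist (f s) (f t) = |s - t|

/-- `X` is a geodesic space. -/
def IsGeodesicSpace (X : Type*) [MetricSpace X] : Prop :=
  ∀ x y : X, ∃ f : ℝ → X, IsGeodesicFrom f x y

/-- `C` is `lam`-quasiconvex: any two of its points are joined by a geodesic contained in
the closed `lam`-neighbourhood of `C`. -/
def IsQuasiconvex {X : Type*} [MetricSpace X] (lam : ℝ) (C : Set X) : Prop :=
  ∀ x ∈ C, ∀ y ∈ C, ∃ f : ℝ → X, IsGeodesicFrom f x y ∧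
    ∀ t ∈ Set.Icc 0 (dist x y), infDist (f t) C ≤ lam

/-- `C` is a convex subset: any two of its points are joined by a geodesic inside `C`. -/
def IsConvexSubset {X : Type*} [MetricSpace X] (C : Set X) : Prop :=
  ∀ x ∈ C, ∀ y ∈ C, ∃ f : ℝ → X, IsGeodesicFrom f x y ∧
    ∀ t ∈ Set.Icc 0 (dist x y), f t ∈ C

/-- Arc-length concatenation of three paths, of respective lengths `d₁`, `d₂` and the rest. -/
noncomputable def concatPath {X : Type*} (d₁ d₂ : ℝ) (f₁ f₂ f₃ : ℝ → X) : ℝ → X :=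
  fun t => if t ≤ d₁ then f₁ t else if t ≤ d₁ + d₂ then f₂ (t - d₁) else f₃ (t - d₁ - d₂)

namespace GCB

variable {X : Type*} [MetricSpace X] {σ : X → X → ℝ → X}

theorem dist_left (hσ : IsGCB σ) (x y : X) {t : ℝ} (ht : t ∈ Set.Icc (0:ℝ) 1) :
    dist x (σ x y t) = t * dist x y := by
  have h := hσ.geodesic x y 0 (by simp) t ht
  rw [hσ.source] at h
  rw [h, zero_sub, abs_neg, abs_of_nonneg ht.1]

theorem dist_right (hσ : IsGCB σ) (x y : X) {t : ℝ} (ht : t ∈ Set.Icc (0:ℝ) 1) :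
    dist (σ x y t) y = (1 - t) * dist x y := by
  have h := hσ.geodesic x y t ht 1 (by simp)
  rw [hσ.target] at h
  rw [h, abs_sub_comm, abs_of_nonneg (by linarith [ht.2])]

theorem dist_convex (hσ : IsGCB σ) (x y x' y' : X) {t : ℝ} (ht : t ∈ Set.Icc (0:ℝ) 1) :
    dist (σ x y t) (σ x' y' t) ≤ (1 - t) * dist x x' + t * dist y y' := by
  have h := (hσ.convex x y x' y').2 (Set.left_mem_Icc.2 zero_le_one)
    (Set.right_mem_Icc.2 zero_le_one) (sub_nonneg.2 ht.2) ht.1 (by ring)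
  simpa [hσ.source, hσ.target] using h

theorem displacement_convex (hσ : IsGCB σ) {g : X ≃ᵢ X} (hg : IsSigmaIsometry σ g) (x y : X)
    {t : ℝ} (ht : t ∈ Set.Icc (0:ℝ) 1) :
    dist (σ x y t) (g (σ x y t)) ≤ (1 - t) * dist x (g x) + t * dist y (g y) := by
  rw [hg x y t ht]
  exact dist_convex hσ _ _ _ _ ht

/-- Every segment can be prolonged beyond its endpoint up to any prescribed length. -/
theorem exists_extension (hσ : IsGCB σ) (q z : X) {D : ℝ} (hD : dist q z ≤ D) (hD0 : 0 < D) :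
    ∃ w, dist q w = D ∧ dist z w = D - dist q z ∧ σ q w (dist q z / D) = z := by
  obtain ⟨γ, hγ, hγσ, hγe⟩ := hσ.geodComplete q z
  have h0 : γ 0 = q := by have := hγe 0 (by simp); simpa [hσ.source] using this.symm
  have h1 : γ (dist q z) = z := by have := hγe 1 (by simp); simpa [hσ.target] using this.symm
  have hq : dist q (γ D) = D := by
    rw [← h0, hγ.dist_eq, Real.dist_eq, zero_sub, abs_neg, abs_of_pos hD0]
  refine ⟨γ D, hq, ?_, ?_⟩
  · conv_lhs => rw [← h1, hγ.dist_eq, Real.dist_eq, abs_sub_comm, abs_of_nonneg (by linarith)]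
  · have := hγσ 0 D hD0.le (dist q z / D) ⟨by positivity, (div_le_one hD0).2 hD⟩
    rw [h0] at this
    rw [this, zero_add, sub_zero, div_mul_cancel₀ _ hD0.ne', h1]

/-- If `g` displaces `z` and `D` is at least half this displacement, then squaring `g` nearly
doubles the displacement of `z`, unless some point close to `z` is displaced a lot. -/
theorem exists_displacement_sq_ge (hσ : IsGCB σ) {g : X ≃ᵢ X} (hg : IsSigmaIsometry σ g) (z : X)
    {D : ℝ} (hD0 : 0 < D) (hD : dist z (g z) / 2 ≤ D) :
    ∃ w, dist z w ≤ D + dist z (g z) / 2 ∧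
      2 * dist z (g z) * (1 - dist w (g w) / (2 * D)) ≤ dist z ((g ^ 2) z) := by
  set f := dist z (g z) with hf
  have hf0 : 0 ≤ f := dist_nonneg
  have h2 : (1 / 2 : ℝ) ∈ Set.Icc (0:ℝ) 1 := by constructor <;> norm_num
  set q := σ z (g z) (1 / 2) with hqd
  have hqz : dist q z = f / 2 := by
    rw [dist_comm, dist_left hσ _ _ h2, ← hf]; ring
  obtain ⟨w, hw, hzw, hwz⟩ := exists_extension hσ q z (hqz.le.trans hD) hD0
  have hsq : (g ^ 2) z = g (g z) := by rw [pow_two, IsometryEquiv.mul_apply]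
  have hq2 : dist q (g q) ≤ dist z ((g ^ 2) z) / 2 := by
    have e1 : q = σ (g z) z (1 / 2) := by
      rw [hqd, hσ.reversible _ _ _ h2]; norm_num
    have e2 : g q = σ (g z) (g (g z)) (1 / 2) := by rw [hqd, hg _ _ _ h2]
    rw [e2, e1, hsq]
    have := dist_convex hσ (g z) z (g z) (g (g z)) h2
    rw [dist_self] at this
    linarith
  refine ⟨w, ?_, ?_⟩
  · rw [hzw, hqz]; linarith
  · have ht : f / 2 / D ∈ Set.Icc (0:ℝ) 1 := ⟨by positivity, (div_le_one hD0).2 hD⟩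
    have hc := displacement_convex hσ hg q w ht
    rw [← hqz, hwz] at hc
    rw [← hf, hqz] at hc
    set t := f / 2 / D with htd
    have e : 2 * f * (1 - dist w (g w) / (2 * D)) = 2 * (f - t * dist w (g w)) := by
      rw [htd]; field_simp
    rw [e]
    have hb : (1 - t) * dist q (g q) ≤ dist q (g q) := by
      nlinarith [dist_nonneg (x := q) (y := g q), ht.1]
    linarith

end GCB

/-- Balls of radius `R` contain at most `Φ R s` points at pairwise distance larger than `s`. -/
def HasNetBound (X : Type*) [MetricSpace X] (Φ : ℝ → ℝ → ℕ) : Prop :=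
  ∀ (x : X) (R s : ℝ), 0 < s → ∀ S : Finset X, (↑S ⊆ closedBall x R) →
    (∀ a ∈ S, ∀ b ∈ S, a ≠ b → s < dist a b) → S.card ≤ Φ R s

section Nets

variable {X : Type*} [MetricSpace X] {σ : X → X → ℝ → X}

theorem exists_net_of_card_le {A : Set X} {s : ℝ} (hs : 0 ≤ s) {K : ℕ}
    (hK : ∀ S : Finset X, ↑S ⊆ A → (∀ a ∈ S, ∀ b ∈ S, a ≠ b → s < dist a b) → S.card ≤ K) :
    ∃ N : Finset X, ↑N ⊆ A ∧ (∀ a ∈ N, ∀ b ∈ N, a ≠ b → s < dist a b) ∧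
      ∀ y ∈ A, ∃ n ∈ N, dist y n ≤ s := by
  classical
  let C : Set ℕ := {k | ∃ S : Finset X, ↑S ⊆ A ∧
    (∀ a ∈ S, ∀ b ∈ S, a ≠ b → s < dist a b) ∧ S.card = k}
  have hC : C.Nonempty := ⟨0, ∅, by simp, by simp, by simp⟩
  have hB : BddAbove C := ⟨K, by rintro k ⟨S, h1, h2, rfl⟩; exact hK S h1 h2⟩
  obtain ⟨N, h1, h2, h3⟩ := Nat.sSup_mem hC hB
  refine ⟨N, h1, h2, fun y hy => ?_⟩
  by_contra! hn
  have hyN : y ∉ N := fun h => by have := hn y h; rw [dist_self] at this; linarith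
  have : (insert y N).card ∈ C := by
    refine ⟨insert y N, ?_, ?_, rfl⟩
    · rw [Finset.coe_insert]; exact Set.insert_subset hy h1
    · intro a ha b hb hab
      rcases Finset.mem_insert.1 ha with rfl | ha' <;> rcases Finset.mem_insert.1 hb with rfl | hb'
      · exact absurd rfl hab
      · exact hn _ hb'
      · rw [dist_comm]; exact hn _ ha'
      · exact h2 a ha' b hb' hab
  have := le_csSup hB this
  rw [Finset.card_insert_of_notMem hyN, h3] at this
  omega

theorem card_le_of_separated_large (hσ : IsGCB σ) {P₀ r₀ : ℝ} (hr₀ : 0 < r₀)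
    (hp : IsPacked X P₀ r₀) (n : ℕ) (x : X) (S : Finset X)
    (hS : ↑S ⊆ closedBall x (3 * r₀ + n * r₀))
    (hsep : ∀ a ∈ S, ∀ b ∈ S, a ≠ b → 2 * r₀ < dist a b) :
    (S.card : ℝ) ≤ (max P₀ 1) ^ (n + 1) := by
  classical
  induction n generalizing S with
  | zero =>
    simp only [CharP.cast_eq_zero, zero_mul, add_zero] at hS
    simpa using Or.inl (hp x S hS hsep)
  | succ n ih =>
    have hK : ∀ T : Finset X, ↑T ⊆ closedBall x (3 * r₀ + n * r₀) →
        (∀ a ∈ T, ∀ b ∈ T, a ≠ b → 2 * r₀ < dist a b) →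
        T.card ≤ ⌊(max P₀ 1) ^ (n + 1)⌋₊ := fun T h1 h2 => Nat.le_floor (ih T h1 h2)
    obtain ⟨N, hN, hNs, hNet⟩ := exists_net_of_card_le (by positivity) hK
    have hcov : ∀ y ∈ S, ∃ t ∈ N, dist y t ≤ 3 * r₀ := by
      intro y hy
      have hyR : dist x y ≤ 3 * r₀ + (n + 1) * r₀ := by
        have := hS hy; rw [mem_closedBall, dist_comm] at this; simpa using this
      set ρ := 3 * r₀ + n * r₀ with hρ
      have hρ0 : 0 < ρ := by positivity
      have hlam : ρ / (ρ + r₀) ∈ Set.Icc (0:ℝ) 1 :=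
        ⟨by positivity, (div_le_one (by positivity)).2 (by linarith)⟩
      have h1 := GCB.dist_left hσ x y hlam
      have h2 := GCB.dist_right hσ x y hlam
      have hyR' : dist x y ≤ ρ + r₀ := by rw [hρ]; linarith
      obtain ⟨t, ht, hd⟩ := hNet (σ x y (ρ / (ρ + r₀))) (by
        rw [mem_closedBall, dist_comm, h1]
        calc ρ / (ρ + r₀) * dist x y ≤ ρ / (ρ + r₀) * (ρ + r₀) := by gcongr
          _ = ρ := by field_simp)
      refine ⟨t, ht, ?_⟩
      have h3 : (1 - ρ / (ρ + r₀)) * dist x y ≤ r₀ := by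
        calc (1 - ρ / (ρ + r₀)) * dist x y ≤ (1 - ρ / (ρ + r₀)) * (ρ + r₀) := by
              gcongr; linarith [hlam.2]
          _ = r₀ := by field_simp; ring
      have := dist_triangle y (σ x y (ρ / (ρ + r₀))) t
      rw [dist_comm y (σ x y _), h2] at this
      linarith
    choose! c hcN hcd using hcov
    have hmaps : Set.MapsTo c (S : Set X) (N : Set X) := fun y hy => hcN y hy
    have hcard := Finset.card_eq_sum_card_fiberwise hmaps
    have hfib : ∀ t ∈ N, (((S.filter fun y => c y = t).card : ℕ) : ℝ) ≤ max P₀ 1 := by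
      intro t _
      refine le_trans (hp t _ ?_ ?_) (le_max_left _ _)
      · intro y hy
        simp only [Finset.coe_filter, Set.mem_ofPred_eq] at hy
        rw [mem_closedBall, ← hy.2]; exact hcd y hy.1
      · intro a ha b hb
        exact hsep a (Finset.mem_filter.1 ha).1 b (Finset.mem_filter.1 hb).1
    rw [hcard]; push_cast
    calc (∑ t ∈ N, ((S.filter fun y => c y = t).card : ℝ)) ≤ ∑ _t ∈ N, max P₀ 1 :=
          Finset.sum_le_sum hfib
      _ = N.card * max P₀ 1 := by simp
      _ ≤ (max P₀ 1) ^ (n + 1) * max P₀ 1 := by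
          gcongr; exact ih N hN hNs
      _ = _ := by ring

theorem card_le_of_separated (hσ : IsGCB σ) {P₀ r₀ : ℝ} (hr₀ : 0 < r₀)
    (hp : IsPacked X P₀ r₀) (x : X) (R : ℝ) (S : Finset X) (hS : ↑S ⊆ closedBall x R)
    (hsep : ∀ a ∈ S, ∀ b ∈ S, a ≠ b → 2 * r₀ < dist a b) :
    (S.card : ℝ) ≤ (max P₀ 1) ^ (⌈R / r₀⌉₊ + 1) := by
  refine card_le_of_separated_large hσ hr₀ hp _ x S (hS.trans (closedBall_subset_closedBall ?_))
    hsep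
  have := Nat.le_ceil (R / r₀)
  rw [div_le_iff₀ hr₀] at this
  linarith

/-- Prolonging segments issued from `x` by the factor `l` dilates distances by at least `l`. -/
theorem exists_dilation (hσ : IsGCB σ) (x : X) {l : ℝ} (hl : 1 ≤ l) :
    ∃ e : X → X, (∀ q, dist x (e q) = l * dist x q) ∧
      ∀ q q', l * dist q q' ≤ dist (e q) (e q') := by
  have hl0 : 0 < l := by linarith
  have ht : 1 / l ∈ Set.Icc (0:ℝ) 1 := ⟨by positivity, (div_le_one hl0).2 hl⟩
  have : ∀ q, ∃ w, dist x w = l * dist x q ∧ σ x w (1 / l) = q := by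
    intro q
    rcases eq_or_ne x q with rfl | h
    · refine ⟨x, by simp, ?_⟩
      have := GCB.dist_left hσ x x ht
      rw [dist_self, mul_zero] at this
      exact (dist_eq_zero.1 this).symm
    · have hd : 0 < dist x q := dist_pos.2 h
      obtain ⟨w, h1, -, h3⟩ := GCB.exists_extension hσ x q (D := l * dist x q)
        (by nlinarith) (by positivity)
      refine ⟨w, h1, ?_⟩
      rw [← h3]; congr 1; field_simp
  choose e he1 he2 using this
  refine ⟨e, he1, fun q q' => ?_⟩
  have := GCB.dist_convex hσ x (e q) x (e q') ht
  rw [he2, he2, dist_self, mul_zero, zero_add, one_div_mul_eq_div, le_div_iff₀ hl0] at this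
  linarith

end Nets

theorem exists_hasNetBound (P₀ r₀ : ℝ) (hr₀ : 0 < r₀) :
    ∃ Φ : ℝ → ℝ → ℕ, ∀ (X : Type*) [MetricSpace X] (σ : X → X → ℝ → X),
      IsGCB σ → IsPacked X P₀ r₀ → HasNetBound X Φ := by
  classical
  refine ⟨fun R s => ⌊(max P₀ 1) ^ (⌈max 1 (2 * r₀ / s) * R / r₀⌉₊ + 1)⌋₊, ?_⟩
  intro X _ σ hσ hp x R s hs S hS hsep
  apply Nat.le_floor
  set l := max 1 (2 * r₀ / s) with hl
  have hl1 : 1 ≤ l := le_max_left _ _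
  have hls : 2 * r₀ ≤ l * s := by
    rw [← div_le_iff₀ hs]; exact le_max_right _ _
  obtain ⟨e, he1, he2⟩ := exists_dilation hσ x hl1
  have hinj : Function.Injective e := by
    intro a b hab
    have := he2 a b
    rw [hab, dist_self] at this
    have : dist a b ≤ 0 := by
      by_contra h; push Not at h; nlinarith
    exact dist_le_zero.1 this
  rw [← Finset.card_image_of_injective S hinj]
  refine card_le_of_separated hσ hr₀ hp x _ _ ?_ ?_
  · intro y hy
    obtain ⟨q, hq, rfl⟩ := Finset.mem_image.1 (Finset.mem_coe.1 hy)
    rw [mem_closedBall, dist_comm, he1]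
    have := hS hq; rw [mem_closedBall, dist_comm] at this
    gcongr
  · intro a ha b hb hab
    obtain ⟨q, hq, rfl⟩ := Finset.mem_image.1 ha
    obtain ⟨q', hq', rfl⟩ := Finset.mem_image.1 hb
    have := hsep q hq q' hq' (fun h => hab (by rw [h]))
    have := he2 q q'
    nlinarith

/-- Bound for the number of isometries displacing a point at most `L` and pairwise `s`-separated
on the ball of radius `R` around this point. -/
noncomputable def isometryCount (Φ : ℝ → ℝ → ℕ) (R L s : ℝ) : ℕ :=
  (Φ (R + L) (s / 8) + 1) ^ Φ R (s / 4)

theorem HasNetBound.card_le_isometryCount {X : Type*} [MetricSpace X] {Φ : ℝ → ℝ → ℕ}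
    (hΦ : HasNetBound X Φ) (y : X) {R L s : ℝ} (hs : 0 < s) (T : Finset (X ≃ᵢ X))
    (hL : ∀ t ∈ T, dist y (t y) ≤ L)
    (hsep : ∀ t ∈ T, ∀ t' ∈ T, t ≠ t' → ∃ z ∈ closedBall y R, s < dist (t z) (t' z)) :
    T.card ≤ isometryCount Φ R L s := by
  classical
  obtain ⟨N₁, hN₁, hN₁s, hNet₁⟩ :=
    exists_net_of_card_le (A := closedBall y R) (s := s / 4) (by positivity)
      (hΦ y R (s / 4) (by positivity))
  obtain ⟨N₂, hN₂, hN₂s, hNet₂⟩ :=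
    exists_net_of_card_le (A := closedBall y (R + L)) (s := s / 8) (by positivity)
      (hΦ y (R + L) (s / 8) (by positivity))
  have h : ∀ t ∈ T, ∀ n : N₁, ∃ m : N₂, dist (t n) m ≤ s / 8 := by
    intro t ht n
    obtain ⟨m, hm, hd⟩ := hNet₂ (t n) (by
      have h1 := hN₁ n.2
      rw [mem_closedBall] at h1 ⊢
      have h2 := dist_triangle (t n) (t y) y
      rw [t.dist_eq, dist_comm (t y)] at h2
      linarith [hL t ht])
    exact ⟨⟨m, hm⟩, hd⟩
  have hinj : ∃ c : T → (N₁ → N₂), Function.Injective c := by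
    choose c hc using fun t : T => h t.1 t.2
    refine ⟨c, fun t t' htt => ?_⟩
    by_contra hne
    obtain ⟨z, hz, hd⟩ := hsep t t.2 t' t'.2 (fun h => hne (Subtype.ext h))
    obtain ⟨n, hn, hzn⟩ := hNet₁ z hz
    have h1 := hc t ⟨n, hn⟩
    have h2 := hc t' ⟨n, hn⟩
    rw [← htt] at h2
    simp only at h1 h2
    have h3 := dist_triangle4 (t.1 z) (t.1 n) (t'.1 n) (t'.1 z)
    rw [IsometryEquiv.dist_eq, IsometryEquiv.dist_eq, dist_comm n z] at h3
    have h4 := dist_triangle_right (t.1 n) (t'.1 n) (c t ⟨n, hn⟩ : X)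
    linarith
  obtain ⟨c, hc⟩ := hinj
  have h1 := Fintype.card_le_of_injective c hc
  rw [Fintype.card_fun] at h1
  simp only [Fintype.card_coe] at h1
  calc T.card ≤ N₂.card ^ N₁.card := h1
    _ ≤ (Φ (R + L) (s / 8) + 1) ^ N₁.card :=
        Nat.pow_le_pow_left ((hΦ y _ _ (by positivity) N₂ hN₂ hN₂s).trans (Nat.le_succ _)) _
    _ ≤ _ := Nat.pow_le_pow_right (by omega) (hΦ y _ _ (by positivity) N₁ hN₁ hN₁s)

section Displacement

variable {X : Type*} [MetricSpace X] {σ : X → X → ℝ → X}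

theorem IsSigmaIsometry.pow {g : X ≃ᵢ X} (hg : IsSigmaIsometry σ g) (n : ℕ) :
    IsSigmaIsometry σ (g ^ n) := by
  induction n with
  | zero => intro x y t _; simp
  | succ n ih =>
    intro x y t ht
    rw [pow_succ', IsometryEquiv.mul_apply, IsometryEquiv.mul_apply, IsometryEquiv.mul_apply,
      ih x y t ht, hg _ _ t ht]

theorem dist_inv_apply (g : X ≃ᵢ X) (z : X) : dist z (g⁻¹ z) = dist z (g z) := by
  rw [← g.dist_eq z, IsometryEquiv.apply_inv_self, dist_comm]

theorem dist_mul_apply_le (g h : X ≃ᵢ X) (z : X) :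
    dist z ((g * h) z) ≤ dist z (g z) + dist z (h z) := by
  rw [IsometryEquiv.mul_apply, ← g.dist_eq z (h z)]
  exact dist_triangle _ _ _

/-- Largest displacement of a point of the ball of centre `y` and radius `r` under `g`. -/
noncomputable def disp (y : X) (r : ℝ) (g : X ≃ᵢ X) : ℝ :=
  ⨆ z : closedBall y r, dist (z : X) (g z)

theorem dist_apply_le_of_mem_closedBall {y z : X} {r : ℝ} (hz : z ∈ closedBall y r)
    (g : X ≃ᵢ X) : dist z (g z) ≤ dist y (g y) + 2 * r := by
  rw [mem_closedBall] at hz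
  have h := dist_triangle4 z y (g y) (g z)
  rw [g.dist_eq, dist_comm y z] at h
  linarith

theorem dist_le_disp {y z : X} {r : ℝ} (hz : z ∈ closedBall y r) (g : X ≃ᵢ X) :
    dist z (g z) ≤ disp y r g := by
  have hb : BddAbove (Set.range fun z : closedBall y r => dist (z : X) (g z)) := by
    refine ⟨dist y (g y) + 2 * r, ?_⟩
    rintro _ ⟨z, rfl⟩
    exact dist_apply_le_of_mem_closedBall z.2 g
  exact le_ciSup hb ⟨z, hz⟩

theorem disp_le {y : X} {r : ℝ} (hr : 0 ≤ r) {g : X ≃ᵢ X} {a : ℝ}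
    (h : ∀ z ∈ closedBall y r, dist z (g z) ≤ a) : disp y r g ≤ a := by
  have : Nonempty (closedBall y r) := ⟨⟨y, mem_closedBall_self hr⟩⟩
  exact ciSup_le fun z => h z z.2

theorem dist_center_le_disp {y : X} {r : ℝ} (hr : 0 ≤ r) (g : X ≃ᵢ X) :
    dist y (g y) ≤ disp y r g := dist_le_disp (mem_closedBall_self hr) g

theorem disp_nonneg (y : X) (r : ℝ) (g : X ≃ᵢ X) : 0 ≤ disp y r g :=
  Real.iSup_nonneg fun _ => dist_nonneg

theorem disp_one (y : X) (r : ℝ) : disp y r 1 = 0 := by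
  simp [disp]

theorem disp_inv (y : X) (r : ℝ) (g : X ≃ᵢ X) : disp y r g⁻¹ = disp y r g := by
  simp [disp, dist_inv_apply]

theorem disp_mul_le {y : X} {r : ℝ} (hr : 0 ≤ r) (g h : X ≃ᵢ X) :
    disp y r (g * h) ≤ disp y r g + disp y r h :=
  disp_le hr fun z hz => (dist_mul_apply_le g h z).trans
    (add_le_add (dist_le_disp hz g) (dist_le_disp hz h))

theorem disp_mono {y : X} {r r' : ℝ} (hr : 0 ≤ r) (h : r ≤ r') (g : X ≃ᵢ X) :
    disp y r g ≤ disp y r' g :=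
  disp_le hr fun _ hz => dist_le_disp (closedBall_subset_closedBall h hz) g

theorem disp_pow_le {y : X} {r : ℝ} (hr : 0 ≤ r) (g : X ≃ᵢ X) (n : ℕ) :
    disp y r (g ^ n) ≤ n * disp y r g := by
  induction n with
  | zero => simp [disp_one]
  | succ n ih =>
    rw [pow_succ]
    push_cast
    linarith [disp_mul_le (y := y) hr (g ^ n) g]

theorem disp_conj_le {y : X} {r r' : ℝ} (hr : 0 ≤ r) (h k : X ≃ᵢ X)
    (hr' : r + disp y r k ≤ r') : disp y r (k⁻¹ * h * k) ≤ disp y r' h := by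
  refine disp_le hr fun z hz => ?_
  have e : dist z ((k⁻¹ * h * k) z) = dist (k z) (h (k z)) := by
    rw [← k.dist_eq z, IsometryEquiv.mul_apply, IsometryEquiv.mul_apply,
      IsometryEquiv.apply_inv_self]
  rw [e]
  refine dist_le_disp ?_ h
  have h1 := dist_le_disp hz k
  rw [mem_closedBall] at hz ⊢
  have := dist_triangle (k z) z y
  rw [dist_comm (k z) z] at this
  linarith

/-- One doubling step: the displacement on a ball nearly doubles when squaring. -/
theorem disp_sq_ge (hσ : IsGCB σ) {g : X ≃ᵢ X} (hg : IsSigmaIsometry σ g) (y : X)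
    {s D b : ℝ} (hs : 0 ≤ s) (hD : 0 < D) (hb : disp y (s + 2 * D) g ≤ b) (hbD : b ≤ D) :
    2 * disp y s g * (1 - b / (2 * D)) ≤ disp y s (g ^ 2) := by
  have hb0 : 0 ≤ b := (disp_nonneg _ _ _).trans hb
  have hc : 0 < 2 * (1 - b / (2 * D)) := by
    have : b / (2 * D) ≤ 1 / 2 := by rw [div_le_div_iff₀ (by positivity) (by norm_num)]; linarith
    linarith
  suffices h : disp y s g ≤ disp y s (g ^ 2) / (2 * (1 - b / (2 * D))) by
    rw [le_div_iff₀ hc] at h; linarith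
  refine disp_le hs fun z hz => ?_
  rw [le_div_iff₀ hc]
  have hfz : dist z (g z) ≤ b :=
    (dist_le_disp (closedBall_subset_closedBall (by linarith) hz) g).trans hb
  obtain ⟨w, hw, hsq⟩ := GCB.exists_displacement_sq_ge hσ hg z hD (by linarith)
  have hwb : dist w (g w) ≤ b := by
    refine (dist_le_disp ?_ g).trans hb
    rw [mem_closedBall] at hz ⊢
    have := dist_triangle w z y
    rw [dist_comm w z] at this
    linarith
  calc dist z (g z) * (2 * (1 - b / (2 * D))) = 2 * dist z (g z) * (1 - b / (2 * D)) := by ring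
    _ ≤ 2 * dist z (g z) * (1 - dist w (g w) / (2 * D)) := by gcongr
    _ ≤ dist z ((g ^ 2) z) := hsq
    _ ≤ _ := dist_le_disp hz _

/-- If the dyadic powers of `g` up to `2 ^ I` displace a ball little, then `g` displaces a
slightly smaller ball by at most a multiple of `2 ^ (-I)`. -/
theorem disp_le_of_pow_le (hσ : IsGCB σ) {g : X ≃ᵢ X} (hg : IsSigmaIsometry σ g) (y : X)
    {s D : ℝ} (hs : 0 ≤ s) (hD : 0 < D) (I : ℕ)
    (h : ∀ i ≤ I, disp y (s + 4 * D) (g ^ (2 ^ i)) ≤ D / 12) :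
    disp y s g * 2 ^ I ≤ D / 6 := by
  have hb : ∀ j ≤ I, disp y (s + 2 * D) (g ^ (2 ^ (I - j))) ≤ (2 / 3) ^ j * (D / 12) := by
    intro j
    induction j with
    | zero =>
      intro _
      rw [pow_zero, one_mul]
      exact (disp_mono (by positivity) (by linarith) _).trans (h _ (Nat.sub_le _ _))
    | succ j ih =>
      intro hj
      have h1 := ih (by omega)
      have h2 := disp_sq_ge hσ (hg.pow (2 ^ (I - (j + 1)))) y (s := s + 2 * D) (D := D)
        (b := D / 12) (by positivity) hD
        (by rw [show s + 2 * D + 2 * D = s + 4 * D by ring]; exact h _ (Nat.sub_le _ _))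
        (by linarith)
      rw [← pow_mul, ← pow_succ, show I - (j + 1) + 1 = I - j by omega] at h2
      have h3 : D / 12 / (2 * D) = 1 / 24 := by field_simp; norm_num
      rw [h3] at h2
      have h4 := disp_nonneg y (s + 2 * D) (g ^ 2 ^ (I - (j + 1)))
      rw [pow_succ]
      linarith
  have ha : ∀ j ≤ I, disp y s (g ^ (2 ^ (I - j))) * 2 ^ j ≤ (2 - (2 / 3) ^ j) * (D / 12) := by
    intro j
    induction j with
    | zero =>
      intro _
      have := (disp_mono hs (by linarith : s ≤ s + 4 * D) _).trans (h _ (Nat.sub_le I 0))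
      rw [pow_zero, pow_zero, mul_one]
      linarith
    | succ j ih =>
      intro hj
      have h1 := ih (by omega)
      set q : ℝ := (2 / 3) ^ (j + 1) with hq
      have hq0 : 0 < q := by positivity
      have hq1 : q ≤ 1 := pow_le_one₀ (by norm_num) (by norm_num)
      have hqj : (2 / 3 : ℝ) ^ j = 3 / 2 * q := by rw [hq, pow_succ]; ring
      have h2 := disp_sq_ge hσ (hg.pow (2 ^ (I - (j + 1)))) y (s := s) (D := D)
        (b := q * (D / 12)) hs hD (hb _ hj) (by nlinarith)
      rw [← pow_mul, ← pow_succ, show I - (j + 1) + 1 = I - j by omega] at h2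
      have h3 : q * (D / 12) / (2 * D) = q / 24 := by field_simp; norm_num
      rw [h3] at h2
      rw [hqj] at h1
      set a := disp y s (g ^ 2 ^ (I - (j + 1))) * 2 ^ (j + 1) with hadef
      have h5 : a * (1 - q / 24) ≤ (2 - 3 / 2 * q) * (D / 12) := by
        refine le_trans ?_ h1
        rw [hadef, pow_succ]
        calc disp y s (g ^ 2 ^ (I - (j + 1))) * (2 ^ j * 2) * (1 - q / 24)
            = (2 * disp y s (g ^ 2 ^ (I - (j + 1))) * (1 - q / 24)) * 2 ^ j := by ring
          _ ≤ _ := by gcongr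
      have h6 : (2 - 3 / 2 * q) * (D / 12) ≤ (2 - q) * (D / 12) * (1 - q / 24) := by
        have : 2 - 3 / 2 * q ≤ (2 - q) * (1 - q / 24) := by nlinarith
        calc (2 - 3 / 2 * q) * (D / 12) ≤ ((2 - q) * (1 - q / 24)) * (D / 12) := by gcongr
          _ = _ := by ring
      have h7 : 0 < 1 - q / 24 := by linarith
      exact le_of_mul_le_mul_right (h5.trans h6) h7
  have := ha I le_rfl
  rw [Nat.sub_self, pow_zero, pow_one] at this
  have h0 : 0 ≤ (2 / 3 : ℝ) ^ I * (D / 12) := by positivity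
  linarith

end Displacement

theorem mul_le_of_dyadic {a b x e : ℝ} (ha : 0 ≤ a) (hab : a < b) (hx : 0 ≤ x)
    (h : ∀ I : ℕ, 2 ^ I * a < b → x * 2 ^ I ≤ e) : x * b ≤ 2 * e * a := by
  have hb : 0 < b := ha.trans_lt hab
  rcases ha.eq_or_lt with rfl | ha
  · rcases hx.eq_or_lt with rfl | hx
    · simp
    · exfalso
      obtain ⟨I, hI⟩ := pow_unbounded_of_one_lt (e / x) (one_lt_two (α := ℝ))
      have := h I (by simpa using hb)
      rw [div_lt_iff₀ hx] at hI
      linarith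
  · have hex : ∃ I : ℕ, b ≤ 2 ^ I * a := by
      obtain ⟨I, hI⟩ := pow_unbounded_of_one_lt (b / a) (one_lt_two (α := ℝ))
      exact ⟨I, by rw [div_lt_iff₀ ha] at hI; exact hI.le⟩
    classical
    obtain ⟨I, hI, hmin⟩ : ∃ I : ℕ, b ≤ 2 ^ (I + 1) * a ∧ 2 ^ I * a < b := by
      have h1 := Nat.find_spec hex
      have h2 : Nat.find hex ≠ 0 := by
        intro h0; rw [h0] at h1; simp at h1; linarith
      obtain ⟨I, hI⟩ := Nat.exists_eq_succ_of_ne_zero h2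
      refine ⟨I, by rw [hI] at h1; exact h1, ?_⟩
      exact not_le.1 (Nat.find_min hex (by omega))
    have := h I hmin
    calc x * b ≤ x * (2 ^ (I + 1) * a) := by gcongr
      _ = 2 * (x * 2 ^ I) * a := by ring
      _ ≤ 2 * e * a := by gcongr

section GoodRadius

variable {X : Type*} [MetricSpace X] {σ : X → X → ℝ → X}

theorem Subgroup.inv_mul_mul_mem {G : Type*} [Group G] {Γ : Subgroup G} {t h t' : G} (ht : t ∈ Γ)
    (hh : h ∈ Γ) (ht' : t' ∈ Γ) : t⁻¹ * h * t' ∈ Γ :=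
  Γ.mul_mem (Γ.mul_mem (Γ.inv_mem ht) hh) ht'

theorem exists_lt_of_lt_disp {y : X} {r : ℝ} (hr : 0 ≤ r) {g : X ≃ᵢ X} {a : ℝ}
    (h : a < disp y r g) : ∃ z ∈ closedBall y r, a < dist z (g z) := by
  by_contra! hn
  exact absurd (disp_le hr hn) (not_le.2 h)

/-- An isometry which moves little the points of a ball, but more those of a slightly larger
ball, moves a definite amount some point at distance one from the first ball. -/
theorem exists_displaced_far (hσ : IsGCB σ) {u : X ≃ᵢ X} (hu : IsSigmaIsometry σ u) {y : X}
    {r D : ℝ} (hr : 0 ≤ r) (hD : 0 < D) (hD1 : 5 * D ≤ 1) (h1 : disp y r u ≤ D / 50)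
    (h2 : D / 12 - D / 50 < disp y (r + 5 * D) u) :
    ∃ w ∈ closedBall y (r + 1), 1 / 200 < dist w (u w) := by
  obtain ⟨z, hz, hfz⟩ := exists_lt_of_lt_disp (by positivity) h2
  rw [mem_closedBall, dist_comm] at hz
  have hzr : r < dist y z := by
    by_contra! hn
    have := dist_le_disp (y := y) (r := r) (z := z) (by rw [mem_closedBall, dist_comm]; exact hn) u
    linarith
  have hl0 : 0 < dist y z := by linarith
  have hl : r / dist y z ∈ Set.Icc (0:ℝ) 1 := ⟨by positivity, (div_le_one hl0).2 hzr.le⟩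
  set q := σ y z (r / dist y z) with hq
  have hyq : dist y q = r := by
    rw [hq, GCB.dist_left hσ _ _ hl, div_mul_cancel₀ _ hl0.ne']
  have hqz : dist q z = dist y z - r := by
    rw [hq, GCB.dist_right hσ _ _ hl]; field_simp
  obtain ⟨w, hw, -, hwz⟩ := GCB.exists_extension hσ q z (D := 1) (by linarith) one_pos
  refine ⟨w, ?_, ?_⟩
  · rw [mem_closedBall, dist_comm]
    linarith [dist_triangle y q w]
  · rw [div_one] at hwz
    have ht : dist q z ∈ Set.Icc (0:ℝ) 1 := ⟨dist_nonneg, by linarith⟩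
    have hc := GCB.displacement_convex hσ hu q w ht
    rw [hwz] at hc
    have hfq : dist q (u q) ≤ D / 50 := (dist_le_disp (by
      rw [mem_closedBall, dist_comm]; exact hyq.le) u).trans h1
    by_contra! hn
    have h3 : (1 - dist q z) * dist q (u q) ≤ D / 50 := by
      nlinarith [dist_nonneg (x := q) (y := u q), ht.1, ht.2]
    have h4 : dist q z * dist w (u w) ≤ (5 * D) * (1 / 200) := by
      gcongr; linarith
    linarith

/-- Among finitely many consecutive radii there is one such that every element of the group
displacing little the ball of this radius also displaces little the next ball. -/
theorem exists_good_radius (hσ : IsGCB σ) {Φ : ℝ → ℝ → ℕ} (hΦ : HasNetBound X Φ)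
    {Γ : Subgroup (X ≃ᵢ X)} (hΓ : ∀ g ∈ Γ, IsSigmaIsometry σ g) (y : X) {m : ℕ}
    (hm : isometryCount Φ 4 1 (1 / 200) < m) {D ρ : ℝ} (hD : D = 1 / (5 * m))
    (hρ : ρ = D / (100 * m)) :
    ∃ r, 1 ≤ r ∧ r + 5 * D ≤ 2 ∧ ∀ h ∈ Γ, disp y r h ≤ ρ → disp y (r + 5 * D) h ≤ D / 12 := by
  classical
  have hm0 : (0:ℝ) < m := by exact_mod_cast (Nat.zero_le _).trans_lt hm
  have hm1 : (1:ℝ) ≤ m := by exact_mod_cast Nat.succ_le_of_lt ((Nat.zero_le _).trans_lt hm)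
  have hD0 : 0 < D := by rw [hD]; positivity
  have hDm : 5 * D * m = 1 := by rw [hD]; field_simp
  have hD1 : 5 * D ≤ 1 := by nlinarith
  have hρ0 : 0 < ρ := by rw [hρ]; positivity
  have hρm : m * ρ = D / 100 := by rw [hρ]; field_simp
  by_contra! hcon
  have hbad : ∀ j : ℕ, j < m → ∃ h ∈ Γ, disp y (1 + 5 * D * j) h ≤ ρ ∧
      D / 12 < disp y (1 + 5 * D * (j + 1)) h := by
    intro j hj
    have hj' : (j:ℝ) + 1 ≤ m := by exact_mod_cast hj
    obtain ⟨h, h1, h2, h3⟩ := hcon (1 + 5 * D * j) (by nlinarith [Nat.cast_nonneg (α := ℝ) j])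
      (by nlinarith)
    exact ⟨h, h1, h2, by rw [show 1 + 5 * D * ((j:ℝ) + 1) = 1 + 5 * D * j + 5 * D by ring]; exact h3⟩
  have key : ∀ k : ℕ, k ≤ m → ∃ T : Finset (X ≃ᵢ X), T.card = 2 ^ k ∧ (∀ t ∈ T, t ∈ Γ) ∧
      (∀ t ∈ T, disp y (1 + 5 * D * ((m - k : ℕ) : ℝ)) t ≤ k * ρ) ∧
      ∀ t ∈ T, ∀ t' ∈ T, t ≠ t' → ∃ z ∈ closedBall y 4, 1 / 200 < dist (t z) (t' z) := by
    intro k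
    induction k with
    | zero =>
      intro _
      exact ⟨{1}, by simp, by simp [Γ.one_mem], by simp [disp_one], by simp⟩
    | succ k ih =>
      intro hk
      obtain ⟨T, hTc, hTΓ, hTd, hTs⟩ := ih (by omega)
      set j := m - (k + 1) with hj
      obtain ⟨h, hhΓ, hh1, hh2⟩ := hbad j (by omega)
      have hjk : m - k = j + 1 := by omega
      rw [hjk] at hTd
      push_cast at hTd
      have hk' : (k:ℝ) + 1 ≤ m := by exact_mod_cast hk
      have hjm : (j:ℝ) + 1 ≤ m := by exact_mod_cast (by omega : j + 1 ≤ m)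
      have hj0 : (0:ℝ) ≤ j := Nat.cast_nonneg j
      have hr : 0 ≤ 1 + 5 * D * (j:ℝ) := by positivity
      have hr2 : 0 ≤ 1 + 5 * D * ((j:ℝ) + 1) := by positivity
      have hTd' : ∀ t ∈ T, disp y (1 + 5 * D * j) t ≤ k * ρ := fun t ht =>
        (disp_mono hr (by nlinarith) t).trans (hTd t ht)
      have hkρ : 2 * (k * ρ) + ρ ≤ D / 50 := by nlinarith
      have hsep : ∀ t ∈ T, ∀ t' ∈ T, ∃ z ∈ closedBall y 4, 1 / 200 < dist (t z) ((h * t') z) := by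
        intro t ht t' ht'
        have huΓ := Subgroup.inv_mul_mul_mem (hTΓ t ht) hhΓ (hTΓ t' ht')
        set u := t⁻¹ * h * t' with hu
        have h1 : disp y (1 + 5 * D * j) u ≤ D / 50 := by
          have e1 := disp_mul_le (y := y) hr (t⁻¹ * h) t'
          have e2 := disp_mul_le (y := y) hr t⁻¹ h
          rw [disp_inv] at e2
          linarith [hTd' t ht, hTd' t' ht']
        have h2 : D / 12 - D / 50 < disp y (1 + 5 * D * j + 5 * D) u := by
          have e0 : h = t * u * t'⁻¹ := by rw [hu]; group
          have e1 := disp_mul_le (y := y) hr2 (t * u) t'⁻¹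
          have e2 := disp_mul_le (y := y) hr2 t u
          rw [← e0, disp_inv] at e1
          rw [show 1 + 5 * D * (j:ℝ) + 5 * D = 1 + 5 * D * ((j:ℝ) + 1) by ring]
          linarith [hTd t ht, hTd t' ht']
        obtain ⟨w, hw, hd⟩ := exists_displaced_far hσ (hΓ u huΓ) hr hD0 hD1 h1 h2
        refine ⟨w, closedBall_subset_closedBall (by nlinarith) hw, ?_⟩
        rw [← t.dist_eq, hu] at hd
        simpa [IsometryEquiv.mul_apply, IsometryEquiv.apply_inv_self] using hd
      have hne : ∀ t ∈ T, ∀ t' ∈ T, t ≠ h * t' := by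
        intro t ht t' ht' e
        obtain ⟨z, -, hz⟩ := hsep t ht t' ht'
        rw [← e, dist_self] at hz
        norm_num at hz
      refine ⟨T ∪ T.image (h * ·), ?_, ?_, ?_, ?_⟩
      · rw [Finset.card_union_of_disjoint, Finset.card_image_of_injective _
          (mul_right_injective h), hTc, pow_succ]
        · ring
        · rw [Finset.disjoint_left]
          intro t ht ht'
          obtain ⟨t', h1, h2⟩ := Finset.mem_image.1 ht'
          exact hne t ht t' h1 h2.symm
      · intro t ht
        rcases Finset.mem_union.1 ht with ht | ht
        · exact hTΓ t ht
        · obtain ⟨t', h1, rfl⟩ := Finset.mem_image.1 ht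
          exact Γ.mul_mem hhΓ (hTΓ _ h1)
      · intro t ht
        push_cast
        rcases Finset.mem_union.1 ht with ht | ht
        · linarith [hTd' t ht]
        · obtain ⟨t', h1, rfl⟩ := Finset.mem_image.1 ht
          linarith [hTd' t' h1, disp_mul_le (y := y) hr h t']
      · intro t ht t' ht' hn
        rcases Finset.mem_union.1 ht with ht | ht <;> rcases Finset.mem_union.1 ht' with ht' | ht'
        · exact hTs t ht t' ht' hn
        · obtain ⟨s, h1, rfl⟩ := Finset.mem_image.1 ht'
          exact hsep t ht s h1
        · obtain ⟨s, h1, rfl⟩ := Finset.mem_image.1 ht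
          obtain ⟨z, hz, hd⟩ := hsep t' ht' s h1
          exact ⟨z, hz, by rw [dist_comm]; exact hd⟩
        · obtain ⟨s, h1, rfl⟩ := Finset.mem_image.1 ht
          obtain ⟨s', h1', rfl⟩ := Finset.mem_image.1 ht'
          obtain ⟨z, hz, hd⟩ := hTs s h1 s' h1' (fun e => hn (by rw [e]))
          refine ⟨z, hz, ?_⟩
          simpa only [IsometryEquiv.mul_apply, IsometryEquiv.dist_eq] using hd
  obtain ⟨T, hTc, -, hTd, hTs⟩ := key m le_rfl
  have := hΦ.card_le_isometryCount y (by norm_num) T (L := 1) (fun t ht => by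
    have h1 := hTd t ht
    rw [Nat.sub_self] at h1
    have := dist_center_le_disp (y := y) (r := 1 + 5 * D * ((0 : ℕ) : ℝ)) (by simp) t
    linarith) hTs
  have h2 := Nat.lt_two_pow_self (n := m)
  omega

theorem disp_mul_le_of_good_radius (hσ : IsGCB σ) {Γ : Subgroup (X ≃ᵢ X)}
    (hΓ : ∀ g ∈ Γ, IsSigmaIsometry σ g) {y : X} {r D ρ : ℝ} (hr : 0 ≤ r) (hD : 0 < D)
    (hgood : ∀ h ∈ Γ, disp y r h ≤ ρ → disp y (r + 5 * D) h ≤ D / 12)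
    {g : X ≃ᵢ X} (hg : g ∈ Γ) {a b : ℝ} (ha : 0 ≤ a) (hab : a < b)
    (h : ∀ n : ℕ, n * a < b → disp y r (g ^ n) ≤ ρ) :
    disp y (r + D) g * b ≤ D / 3 * a := by
  have := mul_le_of_dyadic ha hab (disp_nonneg y (r + D) g) (e := D / 6) (fun I hI => by
    refine disp_le_of_pow_le hσ (hΓ g hg) y (by positivity) hD I fun i hi => ?_
    rw [show r + D + 4 * D = r + 5 * D by ring]
    refine hgood _ (Γ.pow_mem hg _) (h _ ?_)
    push_cast
    refine lt_of_le_of_lt ?_ hI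
    gcongr
    norm_num)
  linarith

end GoodRadius

open scoped commutatorElement

section CommutatorEstimate

variable {G : Type*} [Group G] {N : G → ℝ}

theorem abs_length_sub_le (hinv : ∀ g, N g⁻¹ = N g) (hmul : ∀ g h, N (g * h) ≤ N g + N h)
    (g a : G) : |N (g * a) - N a| ≤ N g := by
  have h1 := hmul g a
  have h2 := hmul g⁻¹ (g * a)
  rw [inv_mul_cancel_left, hinv] at h2
  rw [abs_le]; constructor <;> linarith

/-- Tent function of radius `ρ` associated with a length function. -/
noncomputable def tent {G : Type*} (N : G → ℝ) (ρ : ℝ) (g : G) : ℝ := max 0 (1 - N g / ρ)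

theorem tent_eq_zero {G : Type*} {N : G → ℝ} {ρ : ℝ} (hρ : 0 < ρ) {g : G}
    (h : ρ ≤ N g) : tent N ρ g = 0 :=
  max_eq_left (by have := (one_le_div hρ).2 h; linarith)

theorem abs_tent_sub_le (hinv : ∀ g, N g⁻¹ = N g) (hmul : ∀ g h, N (g * h) ≤ N g + N h)
    {ρ : ℝ} (hρ : 0 < ρ) (g a : G) : |tent N ρ (g * a) - tent N ρ a| ≤ N g / ρ := by
  rw [tent, tent, max_comm 0, max_comm 0]
  refine (abs_max_sub_max_le_abs _ _ _).trans ?_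
  rw [abs_sub_comm, show 1 - N a / ρ - (1 - N (g * a) / ρ) = (N (g * a) - N a) / ρ by ring,
    abs_div, abs_of_pos hρ]
  exact div_le_div_of_nonneg_right (abs_length_sub_le hinv hmul g a) hρ.le

/-- Convolution of the tent function with itself. -/
noncomputable def tentConv (N : G → ℝ) (ρ : ℝ) (x : G) : ℝ :=
  ∑ᶠ k, tent N ρ k * tent N ρ (k⁻¹ * x)

theorem finite_support_tent {G : Type*} {N : G → ℝ} (hfin : ∀ R, {g : G | N g ≤ R}.Finite)
    {ρ : ℝ} (hρ : 0 < ρ) : (Function.support (tent N ρ)).Finite :=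
  (hfin ρ).subset fun g hg => by
    by_contra h
    exact hg (tent_eq_zero hρ (not_le.1 h).le)

theorem tentConv_second_difference (hfin : ∀ R, {g : G | N g ≤ R}.Finite) {ρ : ℝ}
    (hρ : 0 < ρ) (g h z : G) :
    tentConv N ρ (g * (h * z)) - tentConv N ρ (g * z) - tentConv N ρ (h * z) + tentConv N ρ z =
      ∑ᶠ k, (tent N ρ (g * k) - tent N ρ k) *
        (tent N ρ (k⁻¹ * (h * z)) - tent N ρ (k⁻¹ * z)) := by
  have hs := finite_support_tent hfin hρ
  have hs' : (Function.support fun k => tent N ρ (g * k)).Finite :=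
    hs.preimage (mul_right_injective g).injOn
  have hr : ∀ w, tentConv N ρ (g * w) = ∑ᶠ k, tent N ρ (g * k) * tent N ρ (k⁻¹ * w) := by
    intro w
    rw [tentConv, ← finsum_comp_equiv (Equiv.mulLeft g)]
    refine finsum_congr fun k => ?_
    simp [mul_assoc]
  have f1 : ∀ w, (Function.support fun k => tent N ρ (g * k) * tent N ρ (k⁻¹ * w)).Finite :=
    fun w => hs'.subset (Function.support_mul_subset_left _ _)
  have f2 : ∀ w, (Function.support fun k => tent N ρ k * tent N ρ (k⁻¹ * w)).Finite :=
    fun w => hs.subset (Function.support_mul_subset_left _ _)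
  rw [hr, hr, tentConv, tentConv, ← finsum_sub_distrib (f1 _) (f1 _),
    ← finsum_sub_distrib (((f1 _).union (f1 _)).subset (Function.support_sub _ _)) (f2 _),
    ← finsum_add_distrib (((((f1 _).union (f1 _)).subset (Function.support_sub _ _)).union
      (f2 _)).subset (Function.support_sub _ _)) (f2 _)]
  exact finsum_congr fun k => by ring

theorem abs_tentConv_second_difference_le (hfin : ∀ R, {g : G | N g ≤ R}.Finite)
    (hinv : ∀ g, N g⁻¹ = N g) (hmul : ∀ g h, N (g * h) ≤ N g + N h) {ρ C : ℝ} (hρ : 0 < ρ)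
    {g h : G} (hg : N g ≤ ρ) (hg0 : 0 ≤ N g)
    (hC : ∀ k, N k ≤ 2 * ρ → N (k⁻¹ * h * k) ≤ C * N h)
    (A : Finset G) (hA : ∀ k, k ∈ A ↔ N k ≤ 2 * ρ) (z : G) :
    |tentConv N ρ (g * (h * z)) - tentConv N ρ (g * z) - tentConv N ρ (h * z) + tentConv N ρ z| ≤
      A.card * (C * N g * N h / ρ ^ 2) := by
  rw [tentConv_second_difference hfin hρ]
  rw [finsum_eq_sum_of_support_subset (s := A)]
  · refine (Finset.abs_sum_le_sum_abs _ _).trans ?_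
    rw [← nsmul_eq_mul, ← Finset.sum_const]
    refine Finset.sum_le_sum fun k hk => ?_
    rw [abs_mul]
    have h1 := abs_tent_sub_le hinv hmul hρ g k
    have h2 := abs_tent_sub_le hinv hmul hρ (k⁻¹ * h * k) (k⁻¹ * z)
    rw [show k⁻¹ * h * k * (k⁻¹ * z) = k⁻¹ * (h * z) by group] at h2
    have h3 := hC k ((hA k).1 hk)
    calc _ ≤ (N g / ρ) * (C * N h / ρ) := by
          refine mul_le_mul h1 (h2.trans ?_) (abs_nonneg _) (by positivity)
          gcongr
      _ = _ := by ring
  · intro k hk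
    rw [Finset.mem_coe, hA]
    by_contra hn
    push Not at hn
    refine hk ?_
    have h1 := abs_le.1 (abs_length_sub_le hinv hmul g k)
    simp only
    rw [tent_eq_zero hρ (g := k) (by linarith), tent_eq_zero hρ (g := g * k) (by linarith)]
    ring

/-- **Commutator estimate.** If conjugation by short elements does not expand short lengths too
much, and balls satisfy a doubling condition, the powers of a commutator grow slowly. -/
theorem sq_le_of_lt_length_commutator_pow (hfin : ∀ R, {g : G | N g ≤ R}.Finite)
    (hone : N 1 = 0) (hnn : ∀ g, 0 ≤ N g)
    (hinv : ∀ g, N g⁻¹ = N g) (hmul : ∀ g h, N (g * h) ≤ N g + N h) {ρ C K : ℝ} (hρ : 0 < ρ)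
    {g h : G} (hg : N g ≤ ρ) (hh : N h ≤ ρ)
    (hCg : ∀ k, N k ≤ 2 * ρ → N (k⁻¹ * g * k) ≤ C * N g)
    (hCh : ∀ k, N k ≤ 2 * ρ → N (k⁻¹ * h * k) ≤ C * N h)
    (A B : Finset G) (hA : ∀ k, k ∈ A ↔ N k ≤ 2 * ρ) (hB : ∀ k, k ∈ B ↔ N k ≤ ρ / 2)
    (hAB : (A.card : ℝ) ≤ K * B.card) {n : ℕ} (hn : 2 * ρ < N (⁅g, h⁆ ^ n)) :
    ρ ^ 2 ≤ 8 * n * K * C * (N g * N h) := by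
  set c := ⁅g, h⁆ with hc
  set E := C * N g * N h / ρ ^ 2 with hE
  have hstep : ∀ x, |tentConv N ρ (c * x) - tentConv N ρ x| ≤ 2 * (A.card * E) := by
    intro x
    have h1 := abs_tentConv_second_difference_le hfin hinv hmul hρ hg (hnn g) hCh A hA
      (g⁻¹ * h⁻¹ * x)
    have h2 := abs_tentConv_second_difference_le hfin hinv hmul hρ hh (hnn h) hCg A hA
      (g⁻¹ * h⁻¹ * x)
    have e1 : g * (h * (g⁻¹ * h⁻¹ * x)) = c * x := by rw [hc, commutatorElement_def]; group
    have e2 : h * (g * (g⁻¹ * h⁻¹ * x)) = x := by group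
    rw [e1] at h1
    rw [e2, show C * N h * N g / ρ ^ 2 = E by rw [hE]; ring] at h2
    rw [← hE] at h1
    rw [abs_le] at h1 h2 ⊢
    constructor <;> linarith [h1.1, h1.2, h2.1, h2.2]
  have hpow : ∀ n : ℕ, |tentConv N ρ (c ^ n) - tentConv N ρ 1| ≤ n * (2 * (A.card * E)) := by
    intro n
    induction n with
    | zero => simp
    | succ n ih =>
      have h1 := hstep (c ^ n)
      rw [← pow_succ'] at h1
      push_cast
      rw [abs_le] at h1 ih ⊢
      constructor <;> linarith [h1.1, h1.2, ih.1, ih.2]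
  have hzero : tentConv N ρ (c ^ n) = 0 := by
    rw [tentConv]
    refine (finsum_congr fun k => ?_).trans finsum_zero
    rcases le_or_gt ρ (N k) with h1 | h1
    · rw [tent_eq_zero hρ h1, zero_mul]
    · have h2 := hmul k (k⁻¹ * c ^ n)
      rw [mul_inv_cancel_left] at h2
      rw [tent_eq_zero hρ (g := k⁻¹ * c ^ n) (by linarith), mul_zero]
  have hone' : (B.card : ℝ) * (1 / 4) ≤ tentConv N ρ 1 := by
    rw [tentConv, finsum_eq_sum_of_support_subset (s := A)]
    · have hBA : B ⊆ A := fun k hk => (hA k).2 (by have := (hB k).1 hk; linarith)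
      calc (B.card : ℝ) * (1 / 4) = ∑ _k ∈ B, (1 / 4 : ℝ) := by simp
        _ ≤ ∑ k ∈ B, tent N ρ k * tent N ρ (k⁻¹ * 1) := by
          refine Finset.sum_le_sum fun k hk => ?_
          rw [mul_one, show tent N ρ k⁻¹ = tent N ρ k by simp [tent, hinv]]
          have : 1 / 2 ≤ tent N ρ k := by
            refine le_trans ?_ (le_max_right _ _)
            have h1 := (hB k).1 hk
            have : N k / ρ ≤ 1 / 2 := by rw [div_le_iff₀ hρ]; linarith
            linarith
          nlinarith
        _ ≤ _ := Finset.sum_le_sum_of_subset_of_nonneg hBA fun k _ _ =>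
          mul_nonneg (le_max_left _ _) (le_max_left _ _)
    · intro k hk
      rw [Finset.mem_coe, hA]
      by_contra hn
      push Not at hn
      refine hk ?_
      simp only
      rw [tent_eq_zero hρ (g := k) (by linarith), zero_mul]
  have hB0 : (0:ℝ) < B.card := by
    have : (1:G) ∈ B := (hB 1).2 (by rw [hone]; positivity)
    exact_mod_cast Finset.card_pos.2 ⟨1, this⟩
  have hC0 : 0 ≤ C * N g := by
    have := hCg 1 (by rw [hone]; positivity)
    exact (hnn _).trans this
  have hE0 : 0 ≤ E := by rw [hE]; have := hnn h; positivity
  have h1 := (abs_le.1 (hpow n)).1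
  rw [hzero] at h1
  have h2 : (B.card : ℝ) * (1 / 4) ≤ B.card * (n * (2 * (K * E))) := by
    calc (B.card : ℝ) * (1 / 4) ≤ n * (2 * (A.card * E)) := by linarith
      _ ≤ n * (2 * ((K * B.card) * E)) := by gcongr
      _ = _ := by ring
  have h3 := le_of_mul_le_mul_left h2 hB0
  have h4 : E * ρ ^ 2 = C * N g * N h := by rw [hE]; field_simp
  have h5 : 1 / 4 * ρ ^ 2 ≤ n * (2 * (K * E)) * ρ ^ 2 := by gcongr
  have h6 : n * (2 * (K * E)) * ρ ^ 2 = 2 * n * K * (E * ρ ^ 2) := by ring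
  rw [h6, h4] at h5
  linarith

end CommutatorEstimate

section VirtuallyNilpotent

variable {G : Type*} [Group G]

theorem isVirtuallyNilpotent_of_relIndex {H A : Subgroup G} {n : ℕ}
    (hH : H.lowerCentralSeries n = ⊥) (h : H.relIndex A ≠ 0) : IsVirtuallyNilpotent A := by
  refine ⟨H.subgroupOf A, ⟨h⟩, ?_⟩
  rw [Subgroup.isNilpotent_iff_lowerCentralSeries]
  refine ⟨n, ?_⟩
  apply Subgroup.map_injective A.subtype_injective
  rw [Subgroup.map_lowerCentralSeries, Subgroup.map_bot, eq_bot_iff, ← hH]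
  refine Subgroup.lowerCentralSeries_mono n ?_
  rw [Subgroup.subgroupOf_map_subtype]
  exact inf_le_left

theorem IsVirtuallyNilpotent.exists_lowerCentralSeries_eq_bot {A : Subgroup G}
    (hA : IsVirtuallyNilpotent A) :
    ∃ (H : Subgroup G) (n : ℕ), H.lowerCentralSeries n = ⊥ ∧ H.relIndex A ≠ 0 := by
  obtain ⟨H, hf, hn⟩ := hA
  obtain ⟨n, hn⟩ := (Subgroup.isNilpotent_iff_lowerCentralSeries _).1 hn
  refine ⟨H.map A.subtype, n, ?_, ?_⟩
  · rw [← Subgroup.map_lowerCentralSeries, hn, Subgroup.map_bot]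
  · rw [Subgroup.relIndex, Subgroup.subgroupOf,
      Subgroup.comap_map_eq_self_of_injective A.subtype_injective]
    exact hf.index_ne_zero

theorem IsVirtuallyNilpotent.of_relIndex {A B : Subgroup G} (hA : IsVirtuallyNilpotent A)
    (h : A.relIndex B ≠ 0) : IsVirtuallyNilpotent B := by
  obtain ⟨H, n, h1, h2⟩ := hA.exists_lowerCentralSeries_eq_bot
  exact isVirtuallyNilpotent_of_relIndex h1 (Subgroup.relIndex_ne_zero_trans h2 h)

theorem IsVirtuallyNilpotent.of_le {A B : Subgroup G} (hA : IsVirtuallyNilpotent A)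
    (h : B ≤ A) : IsVirtuallyNilpotent B :=
  hA.of_relIndex (by rw [Subgroup.relIndex_eq_one.2 h]; exact one_ne_zero)

theorem IsVirtuallyNilpotent.map_subtype {Γ : Subgroup G} {A : Subgroup Γ}
    (hA : IsVirtuallyNilpotent A) : IsVirtuallyNilpotent (A.map Γ.subtype) := by
  obtain ⟨H, n, h1, h2⟩ := hA.exists_lowerCentralSeries_eq_bot
  refine isVirtuallyNilpotent_of_relIndex (H := H.map Γ.subtype) (n := n) ?_ ?_
  · rw [← Subgroup.map_lowerCentralSeries, h1, Subgroup.map_bot]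
  · rwa [Subgroup.relIndex_map_map_of_injective _ _ Γ.subtype_injective]

theorem relIndex_ne_zero_of_finite_cover {A B : Subgroup G} {F : Set G} (hF : F.Finite)
    (h : ∀ w ∈ B, ∃ f ∈ F, f⁻¹ * w ∈ A) : A.relIndex B ≠ 0 := by
  rw [Subgroup.relIndex, Subgroup.index_ne_zero_iff_finite]
  choose f hf hfA using fun q : B ⧸ A.subgroupOf B => h q.out q.out.2
  have := hF.to_subtype
  refine Finite.of_injective (fun q => (⟨f q, hf q⟩ : F)) fun q q' hq => ?_
  have hq : f q = f q' := congrArg Subtype.val hq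
  rw [← q.out_eq', ← q'.out_eq', QuotientGroup.eq, Subgroup.mem_subgroupOf]
  have := A.mul_mem (A.inv_mem (hfA q)) (hfA q')
  rw [hq] at this
  simpa [mul_assoc] using this

/-- A group whose lower central series reaches a finite normal subgroup is virtually nilpotent. -/
theorem isVirtuallyNilpotent_of_lowerCentralSeries_le {H E : Subgroup G} {n : ℕ}
    (hE : (E : Set G).Finite) (hHE : H ≤ Subgroup.normalizer (E : Set G))
    (hn : H.lowerCentralSeries n ≤ E) : IsVirtuallyNilpotent H := by
  have := hE.to_subtype
  have : Finite E := this
  set C := H ⊓ Subgroup.centralizer (E : Set G) with hC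
  refine isVirtuallyNilpotent_of_relIndex (H := C) (n := n + 1) ?_ ?_
  · rw [Subgroup.lowerCentralSeries_succ, Subgroup.commutator_comm,
      Subgroup.commutator_eq_bot_iff_le_centralizer]
    refine inf_le_right.trans (Subgroup.centralizer_le ?_)
    exact (Subgroup.lowerCentralSeries_mono n inf_le_left).trans hn
  · have h1 : (Subgroup.centralizer (E : Set G)).relIndex (Subgroup.normalizer (E : Set G)) ≠ 0 := by
      rw [Subgroup.relIndex, ← Subgroup.normalizerMonoidHom_ker]
      have : Finite (MulAut E) := Finite.of_injective (fun e : MulAut E => (e : E → E))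
        DFunLike.coe_injective
      exact Subgroup.FiniteIndex.index_ne_zero
    rw [hC, inf_comm, Subgroup.inf_relIndex_right]
    intro h0
    exact h1 (Subgroup.relIndex_eq_zero_of_le_right hHE h0)

theorem commutator_mem_of_mem_closure {S T : Set G} {K : Subgroup G}
    (hTS : Subgroup.closure T ≤ Subgroup.closure S)
    (hK : Subgroup.closure S ≤ Subgroup.normalizer (K : Set G))
    (h : ∀ s ∈ S, ∀ t ∈ T, ⁅s, t⁆ ∈ K) : ⁅Subgroup.closure S, Subgroup.closure T⁆ ≤ K := by
  have hconj : ∀ x ∈ Subgroup.closure S, ∀ k ∈ K, x * k * x⁻¹ ∈ K := fun x hx k hk =>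
    (Subgroup.mem_normalizer_iff.1 (hK hx) k).1 hk
  have h1 : ∀ x ∈ Subgroup.closure S, ∀ t ∈ T, ⁅x, t⁆ ∈ K := by
    intro x hx t ht
    induction hx using Subgroup.closure_induction with
    | mem s hs => exact h s hs t ht
    | one => simp [K.one_mem]
    | mul a b ha hb iha ihb =>
      have := K.mul_mem (hconj a ha _ ihb) iha
      convert this using 1
      simp only [commutatorElement_def]; group
    | inv a ha iha =>
      have := hconj _ ((Subgroup.closure S).inv_mem ha) _ (K.inv_mem iha)
      convert this using 1
      simp only [commutatorElement_def]; group
  rw [Subgroup.commutator_le]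
  intro x hx w hw
  induction hw using Subgroup.closure_induction with
  | mem t ht => exact h1 x hx t ht
  | one => simp [K.one_mem]
  | mul a b ha hb iha ihb =>
    have := K.mul_mem iha (hconj a (hTS ha) _ ihb)
    convert this using 1
    simp only [commutatorElement_def]; group
  | inv a ha iha =>
    have := hconj _ ((Subgroup.closure S).inv_mem (hTS ha)) _ (K.inv_mem iha)
    convert this using 1
    simp only [commutatorElement_def]; group

/-- If commutators of short elements are much shorter, short elements generate a virtually
nilpotent group. -/
theorem isVirtuallyNilpotent_closure_of_commutator_le {N : G → ℝ}
    (hfin : ∀ R, {g : G | N g ≤ R}.Finite) (hone : N 1 = 0) (hnn : ∀ g, 0 ≤ N g)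
    (hinv : ∀ g, N g⁻¹ = N g) (hmul : ∀ g h, N (g * h) ≤ N g + N h) {ρ : ℝ} (hρ : 0 < ρ)
    (hcomm : ∀ g h, N g ≤ ρ → N h ≤ ρ → N ⁅g, h⁆ ≤ N h / 2) :
    IsVirtuallyNilpotent (Subgroup.closure {g : G | N g ≤ ρ}) := by
  let V : ℕ → Set G := fun j => {g | N g ≤ ρ / 2 ^ j}
  have hV0 : V 0 = {g : G | N g ≤ ρ} := by simp [V]
  have hVle : ∀ j, V (j + 1) ⊆ V j := by
    intro j g hg
    have hg' : N g ≤ ρ / 2 ^ (j + 1) := hg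
    refine hg'.trans ?_
    rw [pow_succ]
    exact div_le_div_of_nonneg_left hρ.le (by positivity)
      (by nlinarith [pow_pos (two_pos (α := ℝ)) j])
  have hV0le : ∀ j, V j ⊆ V 0 := by
    intro j
    induction j with
    | zero => exact subset_rfl
    | succ j ih => exact (hVle j).trans ih
  have hVc : ∀ j, ∀ v ∈ V 0, ∀ w ∈ V j, ⁅v, w⁆ ∈ V (j + 1) := by
    intro j v hv w hw
    have h1 := hcomm v w (by rw [hV0] at hv; exact hv)
      (by have := hV0le j hw; rw [hV0] at this; exact this)
    have h2 : N w ≤ ρ / 2 ^ j := hw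
    show N _ ≤ _
    rw [pow_succ, ← div_div]
    linarith
  have hHle : ∀ j, Subgroup.closure (V j) ≤ Subgroup.closure (V 0) := fun j =>
    Subgroup.closure_mono (hV0le j)
  have hconj : ∀ j, ∀ v ∈ V 0, ∀ k ∈ Subgroup.closure (V j),
      v * k * v⁻¹ ∈ Subgroup.closure (V j) := by
    intro j v hv k hk
    induction hk using Subgroup.closure_induction with
    | mem w hw =>
      rw [show v * w * v⁻¹ = ⁅v, w⁆ * w by rw [commutatorElement_def]; group]
      exact mul_mem (Subgroup.subset_closure (hVle j (hVc j v hv w hw)))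
        (Subgroup.subset_closure hw)
    | one => simp
    | mul a b _ _ iha ihb =>
      rw [show v * (a * b) * v⁻¹ = (v * a * v⁻¹) * (v * b * v⁻¹) by group]
      exact mul_mem iha ihb
    | inv a _ iha =>
      rw [show v * a⁻¹ * v⁻¹ = (v * a * v⁻¹)⁻¹ by group]
      exact inv_mem iha
  have hnorm : ∀ j, Subgroup.closure (V 0) ≤ Subgroup.normalizer
      (Subgroup.closure (V j) : Set G) := by
    intro j
    rw [Subgroup.closure_le]
    intro v hv
    rw [SetLike.mem_coe, Subgroup.mem_normalizer_iff]
    intro k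
    refine ⟨hconj j v hv k, fun hk => ?_⟩
    have hv' : v⁻¹ ∈ V 0 := by show N _ ≤ _; rw [hinv]; exact hv
    have := hconj j _ hv' _ hk
    simpa [mul_assoc] using this
  have hlcs : ∀ j, (Subgroup.closure (V 0)).lowerCentralSeries j ≤ Subgroup.closure (V j) := by
    intro j
    induction j with
    | zero => exact le_rfl
    | succ j ih =>
      rw [Subgroup.lowerCentralSeries_succ, Subgroup.commutator_comm]
      refine (Subgroup.commutator_mono le_rfl ih).trans ?_
      exact commutator_mem_of_mem_closure (hHle j) (hnorm _) fun s hs t ht =>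
        Subgroup.subset_closure (hVc j s hs t ht)
  obtain ⟨J, hJ⟩ : ∃ J, ∀ g ∈ V J, N g = 0 := by
    by_contra! hcon
    choose f hf hf0 using hcon
    have hfin' : (N '' {g : G | N g ≤ ρ}).Finite := (hfin ρ).image _
    have hpos : ∃ ε > 0, ∀ g, N g ≤ ρ → N g ≠ 0 → ε ≤ N g := by
      have hne : ((N '' {g : G | N g ≤ ρ}) \ {0}).Nonempty := by
        refine ⟨N (f 0), ⟨f 0, ?_, rfl⟩, hf0 0⟩
        have := hf 0; rw [hV0] at this; exact this
      obtain ⟨a, ha, hmin⟩ := Set.exists_min_image _ id (hfin'.subset Set.sdiff_subset) hne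
      obtain ⟨⟨g, hg, rfl⟩, ha0⟩ := ha
      exact ⟨N g, lt_of_le_of_ne (hnn g) (Ne.symm ha0), fun g' h1 h2 =>
        hmin (N g') ⟨⟨g', h1, rfl⟩, h2⟩⟩
    obtain ⟨ε, hε, hmin⟩ := hpos
    obtain ⟨J, hJ⟩ := pow_unbounded_of_one_lt (ρ / ε) (one_lt_two (α := ℝ))
    have h1 := hmin (f J) (by have := hV0le J (hf J); rw [hV0] at this; exact this) (hf0 J)
    have h2 : N (f J) ≤ ρ / 2 ^ J := hf J
    rw [div_lt_iff₀ hε] at hJ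
    have h3 : ρ / 2 ^ J < ε := by rw [div_lt_iff₀ (by positivity)]; linarith
    linarith
  have hfinJ : (Subgroup.closure (V J) : Set G).Finite := by
    refine (hfin 0).subset fun g hg => ?_
    show N g ≤ 0
    induction hg using Subgroup.closure_induction with
    | mem w hw => exact (hJ w hw).le
    | one => exact hone.le
    | mul a b _ _ iha ihb => linarith [hmul a b]
    | inv a _ iha => rw [hinv]; exact iha
  rw [← hV0]
  exact isVirtuallyNilpotent_of_lowerCentralSeries_le hfinJ (hnorm J) (hlcs J)

end VirtuallyNilpotent

open scoped commutatorElement Pointwise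

section Margulis

theorem finite_setOf_disp_le {X : Type*} [MetricSpace X] {Γ : Subgroup (X ≃ᵢ X)}
    (hd : IsDiscreteSubgroup Γ) (y : X) {r : ℝ} (hr : 0 ≤ r) (R : ℝ) :
    {g : Γ | disp y r (g : X ≃ᵢ X) ≤ R}.Finite := by
  refine Set.Finite.subset ((hd y R).preimage Subtype.val_injective.injOn) fun g hg => ?_
  have hg' : disp y r (g : X ≃ᵢ X) ≤ R := hg
  exact ⟨g.2, (dist_center_le_disp hr _).trans hg'⟩

theorem card_le_mul_card_of_disp {X : Type*} [MetricSpace X] {Φ : ℝ → ℝ → ℕ}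
    (hΦ : HasNetBound X Φ) {Γ : Subgroup (X ≃ᵢ X)} (y : X) {r ρ : ℝ} (hr : 0 ≤ r) (hr2 : r ≤ 2)
    (hρ : 0 < ρ) (hρ1 : 2 * ρ ≤ 1) (A B : Finset Γ)
    (hA : ∀ k, k ∈ A ↔ disp y r (k : X ≃ᵢ X) ≤ 2 * ρ)
    (hB : ∀ k, k ∈ B ↔ disp y r (k : X ≃ᵢ X) ≤ ρ / 2) :
    (A.card : ℝ) ≤ isometryCount Φ 2 1 (ρ / 2) * B.card := by
  classical
  let P : Finset (Finset Γ) := A.powerset.filter fun T => ∀ t ∈ T, ∀ t' ∈ T, t ≠ t' →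
    ρ / 2 < disp y r ((t⁻¹ * t' : Γ) : X ≃ᵢ X)
  obtain ⟨T, hTP, hTmax⟩ := P.exists_max_image Finset.card ⟨∅, by simp [P]⟩
  simp only [P, Finset.mem_filter, Finset.mem_powerset] at hTP hTmax
  obtain ⟨hTA, hTs⟩ := hTP
  have hTc : T.card ≤ isometryCount Φ 2 1 (ρ / 2) := by
    rw [← Finset.card_image_of_injective T Subtype.val_injective]
    refine hΦ.card_le_isometryCount y (by positivity) _ ?_ ?_
    · intro t ht
      obtain ⟨t, h1, rfl⟩ := Finset.mem_image.1 ht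
      linarith [dist_center_le_disp (y := y) hr (t : X ≃ᵢ X), (hA t).1 (hTA h1)]
    · intro t ht t' ht' hne
      obtain ⟨t, h1, rfl⟩ := Finset.mem_image.1 ht
      obtain ⟨t', h1', rfl⟩ := Finset.mem_image.1 ht'
      obtain ⟨z, hz, hd⟩ := exists_lt_of_lt_disp hr
        (hTs t h1 t' h1' (fun h => hne (by rw [h])))
      refine ⟨z, closedBall_subset_closedBall hr2 hz, ?_⟩
      rw [← (t : X ≃ᵢ X).dist_eq] at hd
      simpa [IsometryEquiv.mul_apply, IsometryEquiv.apply_inv_self] using hd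
  have hcov : A ⊆ (T ×ˢ B).image fun p => p.1 * p.2 := by
    intro a ha
    have : ∃ t ∈ T, disp y r ((t⁻¹ * a : Γ) : X ≃ᵢ X) ≤ ρ / 2 := by
      by_contra! hn
      have haT : a ∉ T := fun h => by
        have := hn a h
        simp only [inv_mul_cancel, Subgroup.coe_one, disp_one] at this
        linarith
      have h1 := hTmax (insert a T) ⟨Finset.insert_subset ha hTA, by
        intro t ht t' ht' hne
        rcases Finset.mem_insert.1 ht with rfl | h1 <;>
          rcases Finset.mem_insert.1 ht' with rfl | h1'
        · exact absurd rfl hne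
        · have := hn t' h1'
          rw [← disp_inv, ← Subgroup.coe_inv, mul_inv_rev, inv_inv] at this
          exact this
        · exact hn t h1
        · exact hTs t h1 t' h1' hne⟩
      rw [Finset.card_insert_of_notMem haT] at h1
      omega
    obtain ⟨t, ht, hd⟩ := this
    exact Finset.mem_image.2 ⟨(t, t⁻¹ * a), Finset.mem_product.2 ⟨ht, (hB _).2 hd⟩, by simp⟩
  have h1 := (Finset.card_le_card hcov).trans Finset.card_image_le
  rw [Finset.card_product] at h1
  calc (A.card : ℝ) ≤ (T.card : ℝ) * B.card := by exact_mod_cast h1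
    _ ≤ _ := by gcongr

set_option maxHeartbeats 1000000 in
/-- **Margulis lemma**: elements displacing little a ball of radius two generate a virtually
nilpotent group, with constants depending only on the counting function. -/
theorem exists_margulis_constant (Φ : ℝ → ℝ → ℕ) :
    ∃ ρ₁ : ℝ, 0 < ρ₁ ∧ ∀ (X : Type*) [MetricSpace X] (σ : X → X → ℝ → X), IsGCB σ →
      HasNetBound X Φ → ∀ Γ : Subgroup (X ≃ᵢ X), (∀ g ∈ Γ, IsSigmaIsometry σ g) →
      IsDiscreteSubgroup Γ → ∀ y : X, ∃ A : Subgroup (X ≃ᵢ X), IsVirtuallyNilpotent A ∧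
        ∀ g ∈ Γ, disp y 2 g ≤ ρ₁ → g ∈ A := by
  set m : ℕ := isometryCount Φ 4 1 (1 / 200) + 1 with hm
  have hm1 : (1:ℝ) ≤ m := by exact_mod_cast Nat.le_add_left 1 _
  set D : ℝ := 1 / (5 * m) with hD
  set ρ₂ : ℝ := D / (100 * m) with hρ₂
  have hD0 : 0 < D := by positivity
  have hD1 : D ≤ 1 / 5 := by
    rw [hD]; exact one_div_le_one_div_of_le (by norm_num) (by linarith)
  have hρ₂0 : 0 < ρ₂ := by positivity
  have hρ₂D : ρ₂ ≤ D := by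
    rw [hρ₂]; exact div_le_self hD0.le (by linarith)
  set ρ := ρ₂ / 2 with hρ
  have hρ0 : 0 < ρ := by positivity
  set K : ℝ := Nat.cast (isometryCount Φ 2 1 (ρ / 2)) with hK
  set C : ℝ := D / 3 / ρ₂ with hC
  set Q : ℝ := 8 * K * C with hQ
  have hQ0 : 0 ≤ Q := by positivity
  set ρ₁ : ℝ := ρ ^ 2 / (2 * (1 + Q)) with hρ₁
  have hρ₁0 : 0 < ρ₁ := by positivity
  have hρ₁Q : 2 * (1 + Q) * ρ₁ = ρ ^ 2 := by rw [hρ₁]; field_simp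
  have hρ₁1 : ρ₁ ≤ ρ := by nlinarith
  refine ⟨ρ₁, hρ₁0, ?_⟩
  intro X _ σ hσ hΦ Γ hΓ hd y
  obtain ⟨r, hr1, hr2, hgood⟩ := exists_good_radius hσ hΦ hΓ y (m := m) (by omega) hD hρ₂
  have hr0 : 0 ≤ r := by linarith
  let N : Γ → ℝ := fun g => disp y r (g : X ≃ᵢ X)
  have hfin : ∀ R, {g : Γ | N g ≤ R}.Finite := finite_setOf_disp_le hd y hr0
  have hone : N 1 = 0 := disp_one y r
  have hnn : ∀ g, 0 ≤ N g := fun g => disp_nonneg _ _ _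
  have hinv : ∀ g, N g⁻¹ = N g := fun g => disp_inv y r g
  have hmul : ∀ g h, N (g * h) ≤ N g + N h := fun g h => disp_mul_le hr0 (g : X ≃ᵢ X) (h : X ≃ᵢ X)
  have hconj : ∀ h : Γ, N h ≤ ρ → ∀ k : Γ, N k ≤ 2 * ρ → N (k⁻¹ * h * k) ≤ C * N h := by
    intro h hh k hk
    have h1 : N (k⁻¹ * h * k) ≤ disp y (r + D) (h : X ≃ᵢ X) :=
      disp_conj_le hr0 _ _ (by have : N k ≤ D := by linarith
                               simpa [N] using this)
    have h2 := disp_mul_le_of_good_radius hσ hΓ hr0 hD0 hgood h.2 (hnn h)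
      (b := ρ₂) (by linarith) (fun n hn => (disp_pow_le hr0 _ n).trans hn.le)
    rw [← le_div_iff₀ hρ₂0] at h2
    calc _ ≤ _ := h1
      _ ≤ _ := h2
      _ = C * N h := by rw [hC]; ring
  set A : Finset Γ := (hfin (2 * ρ)).toFinset with hAdef
  set B : Finset Γ := (hfin (ρ / 2)).toFinset with hBdef
  have hA : ∀ k, k ∈ A ↔ N k ≤ 2 * ρ := fun k => by simp [hAdef]
  have hB : ∀ k, k ∈ B ↔ N k ≤ ρ / 2 := fun k => by simp [hBdef]
  have hAB : (A.card : ℝ) ≤ K * B.card :=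
    card_le_mul_card_of_disp hΦ y hr0 (by linarith) hρ0 (by linarith) A B hA hB
  have hcomm : ∀ g h : Γ, N g ≤ ρ₁ → N h ≤ ρ₁ → N ⁅g, h⁆ ≤ N h / 2 := by
    intro g h hg hh
    have hgh : Q * (N g * N h) < ρ ^ 2 := by
      have h1 : N g * N h ≤ ρ₁ * 1 := mul_le_mul hg (by linarith) (hnn h) hρ₁0.le
      calc Q * (N g * N h) ≤ Q * (ρ₁ * 1) := by gcongr
        _ < ρ ^ 2 := by nlinarith
    have h2 := disp_mul_le_of_good_radius hσ hΓ hr0 hD0 hgood (⁅g, h⁆ : Γ).2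
      (a := Q * (N g * N h)) (b := ρ ^ 2)
      (mul_nonneg hQ0 (mul_nonneg (hnn g) (hnn h))) hgh (fun n hn => by
        by_contra hcon
        rw [not_le] at hcon
        have h3 := sq_le_of_lt_length_commutator_pow hfin hone hnn hinv hmul hρ0
          (hg.trans hρ₁1) (hh.trans hρ₁1) (hconj g (hg.trans hρ₁1)) (hconj h (hh.trans hρ₁1))
          A B hA hB hAB (n := n) (by
            have : 2 * ρ = ρ₂ := by rw [hρ]; ring
            rw [this]; simpa [N] using hcon)
        have h4 : 8 * n * K * C * (N g * N h) = n * (Q * (N g * N h)) := by rw [hQ]; ring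
        linarith)
    have h5 : N ⁅g, h⁆ ≤ disp y (r + D) ((⁅g, h⁆ : Γ) : X ≃ᵢ X) :=
      disp_mono hr0 (by linarith) _
    have h6 : N ⁅g, h⁆ * ρ ^ 2 ≤ N h / 2 * ρ ^ 2 := by
      calc N ⁅g, h⁆ * ρ ^ 2 ≤ D / 3 * (Q * (N g * N h)) := by
            refine le_trans ?_ h2; gcongr
        _ ≤ 1 * (Q * (ρ₁ * N h)) := by
            have := hnn g; have := hnn h
            gcongr; linarith
        _ = (Q * ρ₁) * N h := by ring
        _ ≤ (ρ ^ 2 / 2) * N h := by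
            have := hnn h
            gcongr; nlinarith
        _ = _ := by ring
    exact le_of_mul_le_mul_right h6 (by positivity)
  refine ⟨(Subgroup.closure {g : Γ | N g ≤ ρ₁}).map Γ.subtype,
    (isVirtuallyNilpotent_closure_of_commutator_le hfin hone hnn hinv hmul hρ₁0
      hcomm).map_subtype, fun g hg hgd => ?_⟩
  refine Subgroup.mem_map.2 ⟨⟨g, hg⟩, Subgroup.subset_closure ?_, rfl⟩
  exact (disp_mono hr0 (by linarith) g).trans hgd

/-- If the products of at most `M + 1` elements of `S` displace `y` at most `L`, where `M` is
large with respect to `L`, then `S` generates a virtually nilpotent group. -/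
theorem exists_isVirtuallyNilpotent_closure (Φ : ℝ → ℝ → ℕ) (L : ℝ) :
    ∃ M : ℕ, ∀ (X : Type*) [MetricSpace X] (σ : X → X → ℝ → X), IsGCB σ →
      HasNetBound X Φ → ∀ Γ : Subgroup (X ≃ᵢ X), (∀ g ∈ Γ, IsSigmaIsometry σ g) →
      IsDiscreteSubgroup Γ → ∀ (y : X) (S : Set (X ≃ᵢ X)), S ⊆ Γ → 1 ∈ S →
        (∀ g ∈ S, g⁻¹ ∈ S) → (∀ g ∈ S ^ (M + 1), dist y (g y) ≤ L) →
        IsVirtuallyNilpotent (Subgroup.closure S) := by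
  classical
  obtain ⟨ρ₁, hρ₁, hmarg⟩ := exists_margulis_constant Φ
  refine ⟨isometryCount Φ 2 L ρ₁, ?_⟩
  set M := isometryCount Φ 2 L ρ₁ with hM
  intro X _ σ hσ hΦ Γ hΓ hd y S hSΓ hS1 hSinv hL
  obtain ⟨A, hAvn, hA⟩ := hmarg X σ hσ hΦ Γ hΓ hd y
  have hpowΓ : ∀ k : ℕ, S ^ k ⊆ Γ := by
    intro k
    induction k with
    | zero => simp [Γ.one_mem]
    | succ k ih =>
      rw [pow_succ]
      rintro _ ⟨a, ha, b, hb, rfl⟩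
      exact Γ.mul_mem (ih ha) (hSΓ hb)
  have hpow : ∀ {i j : ℕ}, i ≤ j → S ^ i ⊆ S ^ j := fun h => Set.pow_subset_pow_right hS1 h
  by_cases hk : ∃ k ≤ M, ∀ w ∈ S ^ (k + 1), ∃ w' ∈ S ^ k, w'⁻¹ * w ∈ A
  · obtain ⟨k, hkM, hk⟩ := hk
    have hfin : (S ^ k).Finite := by
      refine (hd y L).subset fun g hg => ⟨hpowΓ k hg, hL g (hpow (by omega) hg)⟩
    refine hAvn.of_relIndex (relIndex_ne_zero_of_finite_cover hfin fun w hw => ?_)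
    have hstep : ∀ s ∈ S, ∀ w, (∃ f ∈ S ^ k, f⁻¹ * w ∈ A) → ∃ f ∈ S ^ k, f⁻¹ * (s * w) ∈ A := by
      rintro s hs w ⟨f, hf, hfw⟩
      obtain ⟨f', hf', hff'⟩ := hk (s * f) (by rw [pow_succ']; exact Set.mul_mem_mul hs hf)
      refine ⟨f', hf', ?_⟩
      have := A.mul_mem hff' hfw
      simpa [mul_assoc] using this
    induction hw using Subgroup.closure_induction_left with
    | one => exact ⟨1, Set.one_mem_pow hS1, by simp [A.one_mem]⟩
    | mul_left s hs w _ ih => exact hstep s hs w ih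
    | inv_mul_cancel s hs w _ ih => exact hstep _ (hSinv s hs) w ih
  · exfalso
    push Not at hk
    choose! w hw hwA using hk
    have key : ∀ i j, i < j → j ≤ M → (w i)⁻¹ * w j ∉ A := fun i j hij hj =>
      hwA j hj (w i) (hpow hij (hw i (by omega)))
    have hinj : Set.InjOn w (Finset.range (M + 1) : Set ℕ) := by
      intro i hi j hj hij
      simp only [Finset.coe_range, Set.mem_Iio] at hi hj
      by_contra hne
      rcases lt_or_gt_of_ne hne with h | h
      · exact key i j h (by omega) (by rw [hij, inv_mul_cancel]; exact A.one_mem)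
      · exact key j i h (by omega) (by rw [hij, inv_mul_cancel]; exact A.one_mem)
    have hsep : ∀ i j, i < j → j ≤ M → ∃ z ∈ closedBall y 2, ρ₁ < dist (w i z) (w j z) := by
      intro i j hij hj
      have hmem : (w i)⁻¹ * w j ∈ Γ := Γ.mul_mem (Γ.inv_mem (hpowΓ _ (hw i (by omega))))
        (hpowΓ _ (hw j hj))
      have h1 : ρ₁ < disp y 2 ((w i)⁻¹ * w j) := by
        by_contra hn
        exact key i j hij hj (hA _ hmem (not_lt.1 hn))
      obtain ⟨z, hz, hdz⟩ := exists_lt_of_lt_disp (by norm_num) h1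
      refine ⟨z, hz, ?_⟩
      rw [← (w i).dist_eq] at hdz
      simpa [IsometryEquiv.mul_apply, IsometryEquiv.apply_inv_self] using hdz
    have hcard := hΦ.card_le_isometryCount y hρ₁ ((Finset.range (M + 1)).image w) (R := 2) (L := L)
      (by
        intro t ht
        obtain ⟨i, hi, rfl⟩ := Finset.mem_image.1 ht
        rw [Finset.mem_range] at hi
        exact hL _ (hpow (by omega) (hw i (by omega))))
      (by
        intro t ht t' ht' hne
        obtain ⟨i, hi, rfl⟩ := Finset.mem_image.1 ht
        obtain ⟨j, hj, rfl⟩ := Finset.mem_image.1 ht'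
        rw [Finset.mem_range] at hi hj
        rcases lt_trichotomy i j with h | h | h
        · exact hsep i j h (by omega)
        · exact absurd (by rw [h]) hne
        · obtain ⟨z, hz, hdz⟩ := hsep j i h (by omega)
          exact ⟨z, hz, by rw [dist_comm]; exact hdz⟩)
    rw [Finset.card_image_of_injOn hinj, Finset.card_range] at hcard
    omega

end Margulis

namespace GCB

/-- The Gromov product of `x` and `z` seen from `p`. -/
noncomputable def gromovProd {X : Type*} [MetricSpace X] (p x z : X) : ℝ :=
  (dist p x + dist p z - dist x z) / 2

section Hyperbolic

variable {X : Type*} [MetricSpace X] {δ : ℝ}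

theorem gromovProd_comm (p x z : X) : gromovProd p x z = gromovProd p z x := by
  rw [gromovProd, gromovProd, dist_comm x z]; ring

theorem gromovProd_self_right (p x : X) : gromovProd p x p = 0 := by
  rw [gromovProd, dist_self, dist_comm x p]; ring

theorem gromovProd_smul (g : X ≃ᵢ X) (p x z : X) :
    gromovProd (g p) (g x) (g z) = gromovProd p x z := by
  rw [gromovProd, gromovProd, g.dist_eq, g.dist_eq, g.dist_eq]

theorem gromovProd_add_gromovProd (p x z : X) :
    gromovProd p x z + gromovProd x p z = dist p x := by
  rw [gromovProd, gromovProd, dist_comm x p]; ring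

theorem min_gromovProd_le (hX : IsDeltaHyperbolic X δ) (p x w z : X) :
    min (gromovProd p x w) (gromovProd p w z) ≤ gromovProd p x z + δ := by
  have h := hX x z w p
  simp only [gromovProd]
  rw [dist_comm x p, dist_comm z p, dist_comm z w, dist_comm w p] at h
  rcases max_cases (dist x w + dist p z) (dist p x + dist w z) with ⟨h1, _⟩ | ⟨h1, _⟩
  · rw [h1] at h
    exact (min_le_left _ _).trans (by linarith)
  · rw [h1] at h
    exact (min_le_right _ _).trans (by linarith)

theorem gromovProd_le_or (hX : IsDeltaHyperbolic X δ) (p x w z : X) :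
    gromovProd p x w ≤ gromovProd p x z + δ ∨ gromovProd p w z ≤ gromovProd p x z + δ :=
  min_le_iff.1 (min_gromovProd_le hX p x w z)

theorem gromovProd_inv_apply (g : X ≃ᵢ X) (p : X) :
    gromovProd p (g⁻¹ p) (g p) = dist p (g p) - dist p ((g ^ 2) p) / 2 := by
  have h : dist (g⁻¹ p) (g p) = dist p ((g ^ 2) p) := by
    rw [← g.dist_eq (g⁻¹ p) (g p), pow_two, IsometryEquiv.mul_apply, ← IsometryEquiv.mul_apply,
      mul_inv_cancel]; rfl
  rw [gromovProd, h, dist_inv_apply]; ring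

theorem gromovProd_apply_eq (g : X ≃ᵢ X) (p z : X) :
    gromovProd p (g p) (g z) = dist p (g p) - gromovProd p (g⁻¹ p) z := by
  have h := gromovProd_add_gromovProd p (g p) (g z)
  have h2 : gromovProd (g p) p (g z) = gromovProd p (g⁻¹ p) z := by
    rw [← gromovProd_smul g p (g⁻¹ p) z, ← IsometryEquiv.mul_apply g g⁻¹, mul_inv_cancel]; rfl
  linarith

/-- A point nearly minimizing the largest displacement of a family of isometries. -/
theorem exists_near_min [Nonempty X] {T : Set (X ≃ᵢ X)} (hT : T.Nonempty) (hfin : T.Finite)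
    {η : ℝ} (hη : 0 < η) :
    ∃ (y : X) (m : ℝ), (∀ t ∈ T, dist y (t y) ≤ m) ∧ ∀ z, ∃ t ∈ T, m - η < dist z (t z) := by
  obtain ⟨x⟩ := ‹Nonempty X›
  obtain ⟨t₀, ht₀⟩ := hT
  set A : Set ℝ := {r | ∃ y, ∀ t ∈ T, dist y (t y) ≤ r} with hA
  have hbdd : BddBelow A := ⟨0, fun r ⟨y, hy⟩ => dist_nonneg.trans (hy t₀ ht₀)⟩
  obtain ⟨C, hC⟩ := (hfin.image fun t : X ≃ᵢ X => dist x (t x)).bddAbove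
  have hne : A.Nonempty := ⟨C, x, fun t ht => hC (Set.mem_image_of_mem _ ht)⟩
  obtain ⟨m, ⟨y, hy⟩, hm⟩ := Real.lt_sInf_add_pos hne hη
  refine ⟨y, m, hy, fun z => ?_⟩
  by_contra! hcon
  have := csInf_le hbdd (show m - η ∈ A from ⟨z, hcon⟩)
  linarith

/-- At a near-minimum of the largest displacement, two of the elements with large displacement
move the point in different directions. -/
theorem exists_gromovProd_lt_of_near_min {σ : X → X → ℝ → X} (hσ : IsGCB σ)
    (hX : IsDeltaHyperbolic X δ) (hδ : 0 < δ) {T : Set (X ≃ᵢ X)} (hinv : ∀ t ∈ T, t⁻¹ ∈ T)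
    {y : X} {m : ℝ} (hm : 20 * δ ≤ m) (hy : ∀ t ∈ T, dist y (t y) ≤ m)
    (hmin : ∀ z, ∃ t ∈ T, m - 2 * δ < dist z (t z)) :
    ∃ t ∈ T, ∃ t' ∈ T, m - 10 * δ < dist y (t y) ∧ m - 10 * δ < dist y (t' y) ∧
      gromovProd y (t y) (t' y) < 4 * δ := by
  by_contra! hcon
  obtain ⟨t₀, ht₀, hft₀⟩ := hmin y
  have hf0 : 0 < dist y (t₀ y) := by linarith
  have hτ : 4 * δ / dist y (t₀ y) ∈ Set.Icc (0:ℝ) 1 :=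
    ⟨by positivity, (div_le_one hf0).2 (by linarith)⟩
  set z := σ y (t₀ y) (4 * δ / dist y (t₀ y)) with hz
  have hyz : dist y z = 4 * δ := by
    rw [hz, dist_left hσ _ _ hτ, div_mul_cancel₀ _ hf0.ne']
  have hzt : dist z (t₀ y) = dist y (t₀ y) - 4 * δ := by
    rw [hz, dist_right hσ _ _ hτ, sub_mul, div_mul_cancel₀ _ hf0.ne', one_mul]
  obtain ⟨t, ht, hft⟩ := hmin z
  by_cases hbig : m - 10 * δ < dist y (t y)
  · have key : ∀ s ∈ T, m - 10 * δ < dist y (s y) → dist z (s y) ≤ dist y (s y) - 2 * δ := by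
      intro s hs hsb
      have h1 := hcon s hs t₀ ht₀ hsb (by linarith)
      have h2 : gromovProd y (t₀ y) z = 4 * δ := by
        rw [gromovProd, dist_comm (t₀ y) z, hyz, hzt]; ring
      have h3 : 3 * δ ≤ gromovProd y (s y) z := by
        rcases gromovProd_le_or hX y (s y) (t₀ y) z with h | h <;> linarith
      rw [gromovProd, hyz, dist_comm (s y) z] at h3
      linarith
    have k1 := key t ht hbig
    have k2 := key t⁻¹ (hinv t ht) (by rwa [dist_inv_apply])
    rw [dist_inv_apply] at k2
    have k3 : dist (t z) y = dist z (t⁻¹ y) := by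
      rw [← t.dist_eq z (t⁻¹ y), ← IsometryEquiv.mul_apply t t⁻¹, mul_inv_cancel]; rfl
    have h4 := hX z (t z) y (t y)
    rw [k3, t.dist_eq, dist_comm z y, hyz] at h4
    rcases max_cases (4 * δ + 4 * δ) (dist z (t y) + dist z (t⁻¹ y)) with ⟨h, _⟩ | ⟨h, _⟩ <;>
      rw [h] at h4 <;> linarith [hy t ht]
  · have h1 := dist_triangle4 z y (t y) (t z)
    rw [t.dist_eq, dist_comm z y, hyz] at h1
    linarith

theorem exists_lt_dist_sq_of_near_min {σ : X → X → ℝ → X} (hσ : IsGCB σ)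
    (hX : IsDeltaHyperbolic X δ) (hδ : 0 < δ) {T : Set (X ≃ᵢ X)} (hinv : ∀ t ∈ T, t⁻¹ ∈ T)
    {y : X} {m : ℝ} (hm : 2100 * δ ≤ m) (hy : ∀ t ∈ T, dist y (t y) ≤ m)
    (hmin : ∀ z, ∃ t ∈ T, m - 2 * δ < dist z (t z)) :
    ∃ u : X ≃ᵢ X, (u ∈ T ∨ u ∈ T * T) ∧
      dist y (u y) + 2002 * δ ≤ dist y ((u ^ 2) y) := by
  obtain ⟨t, ht, t', ht', h1, h2, h3⟩ :=
    exists_gromovProd_lt_of_near_min hσ hX hδ hinv (by linarith) hy hmin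
  by_cases c1 : gromovProd y (t⁻¹ y) (t y) ≤ 6 * δ
  · refine ⟨t, Or.inl ht, ?_⟩
    rw [gromovProd_inv_apply] at c1; linarith
  by_cases c2 : gromovProd y (t'⁻¹ y) (t' y) ≤ 6 * δ
  · refine ⟨t', Or.inl ht', ?_⟩
    rw [gromovProd_inv_apply] at c2; linarith
  refine ⟨t⁻¹ * t', Or.inr (Set.mul_mem_mul (hinv t ht) ht'), ?_⟩
  set u := t⁻¹ * t' with hu
  have c3 : gromovProd y (t⁻¹ y) (t'⁻¹ y) ≤ 6 * δ := by
    by_contra hc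
    rw [gromovProd_comm] at c1
    rcases gromovProd_le_or hX y (t y) (t⁻¹ y) (t' y) with h | h
    · linarith
    · rcases gromovProd_le_or hX y (t⁻¹ y) (t'⁻¹ y) (t' y) with h' | h' <;> linarith
  have hfu : dist y (u y) = dist (t y) (t' y) := by
    rw [← t.dist_eq y (u y), ← IsometryEquiv.mul_apply t u, hu, mul_inv_cancel_left]
  have hfu2 : dist y (u y) = dist y (t y) + dist y (t' y) - 2 * gromovProd y (t y) (t' y) := by
    rw [hfu, gromovProd]; ring
  have e1 : gromovProd y (t⁻¹ y) (u y) = dist y (t y) - gromovProd y (t y) (t' y) := by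
    have := gromovProd_apply_eq t⁻¹ y (t' y)
    rw [inv_inv, dist_inv_apply] at this
    exact this
  have e2 : gromovProd y (t'⁻¹ y) (u⁻¹ y) = dist y (t' y) - gromovProd y (t y) (t' y) := by
    have := gromovProd_apply_eq t'⁻¹ y (t y)
    rw [inv_inv, dist_inv_apply, gromovProd_comm y (t' y)] at this
    rw [← this, hu, mul_inv_rev, inv_inv]; rfl
  have e3 : gromovProd y (u⁻¹ y) (u y) ≤ 8 * δ := by
    by_contra hc
    rw [gromovProd_comm] at hc
    rcases gromovProd_le_or hX y (t⁻¹ y) (u y) (t'⁻¹ y) with h | h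
    · linarith
    · rcases gromovProd_le_or hX y (u y) (u⁻¹ y) (t'⁻¹ y) with h' | h'
      · linarith
      · rw [gromovProd_comm] at h'
        linarith
  rw [gromovProd_inv_apply] at e3
  linarith

end Hyperbolic


/-- `l` is the asymptotic displacement per iteration of the isometry `g`. -/
def HasStableLength {X : Type*} [MetricSpace X] (g : X ≃ᵢ X) (l : ℝ) : Prop :=
  ∀ z : X, Tendsto (fun n : ℕ => dist z ((g ^ n) z) / n) atTop (nhds l)

section StableLength

variable {X : Type*} [MetricSpace X] {δ : ℝ} {g : X ≃ᵢ X} {l : ℝ}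

theorem dist_pow_add_le (g : X ≃ᵢ X) (z : X) (m n : ℕ) :
    dist z ((g ^ (m + n)) z) ≤ dist z ((g ^ m) z) + dist z ((g ^ n) z) := by
  rw [pow_add]
  exact dist_mul_apply_le _ _ _

theorem subadditive_dist_pow (g : X ≃ᵢ X) (z : X) :
    Subadditive fun n : ℕ => dist z ((g ^ n) z) := fun m n => dist_pow_add_le g z m n

theorem bddBelow_dist_pow (g : X ≃ᵢ X) (z : X) :
    BddBelow (Set.range fun n : ℕ => dist z ((g ^ n) z) / n) :=
  ⟨0, by rintro _ ⟨n, rfl⟩; positivity⟩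

theorem exists_hasStableLength [Nonempty X] (g : X ≃ᵢ X) : ∃ l, HasStableLength g l := by
  obtain ⟨x⟩ := ‹Nonempty X›
  have hx := (subadditive_dist_pow g x).tendsto_lim (bddBelow_dist_pow g x)
  refine ⟨(subadditive_dist_pow g x).lim, fun z => ?_⟩
  have h0 : Tendsto (fun n : ℕ => 2 * dist x z / n) atTop (nhds 0) :=
    tendsto_const_div_atTop_nhds_zero_nat _
  have hd : ∀ n : ℕ, |dist z ((g ^ n) z) - dist x ((g ^ n) x)| ≤ 2 * dist x z := by
    intro n
    have h1 := dist_triangle4 z x ((g ^ n) x) ((g ^ n) z)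
    have h2 := dist_triangle4 x z ((g ^ n) z) ((g ^ n) x)
    rw [(g ^ n).dist_eq] at h1 h2
    rw [dist_comm z x] at h1 h2
    rw [abs_le]; constructor <;> linarith
  have h1 : Tendsto (fun n : ℕ => (dist z ((g ^ n) z) - dist x ((g ^ n) x)) / n) atTop
      (nhds 0) := by
    refine squeeze_zero_norm (fun n => ?_) h0
    rw [norm_div, Real.norm_eq_abs, Real.norm_natCast]
    gcongr
    exact hd n
  have h2 := h1.add hx
  rw [zero_add] at h2
  refine h2.congr fun n => ?_
  ring

theorem HasStableLength.mul_le (hl : HasStableLength g l) (z : X) (n : ℕ) :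
    n * l ≤ dist z ((g ^ n) z) := by
  rcases Nat.eq_zero_or_pos n with rfl | hn
  · simp
  have h1 := (subadditive_dist_pow g z).tendsto_lim (bddBelow_dist_pow g z)
  have h2 := (subadditive_dist_pow g z).lim_le_div (bddBelow_dist_pow g z) hn.ne'
  rw [tendsto_nhds_unique h1 (hl z), le_div_iff₀ (by exact_mod_cast hn)] at h2
  linarith

theorem HasStableLength.le_of_forall_le (hl : HasStableLength g l) (z : X) {C r : ℝ}
    (h : ∀ n : ℕ, dist z ((g ^ n) z) ≤ C + n * r) : l ≤ r := by
  have h0 : Tendsto (fun n : ℕ => C / n + r) atTop (nhds (0 + r)) :=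
    (tendsto_const_div_atTop_nhds_zero_nat _).add_const _
  rw [zero_add] at h0
  refine le_of_tendsto_of_tendsto (hl z) h0 ?_
  filter_upwards [eventually_gt_atTop 0] with n hn
  have hn' : (0:ℝ) < n := by exact_mod_cast hn
  calc _ ≤ (C + n * r) / n := by gcongr; exact h n
    _ = _ := by field_simp

theorem HasStableLength.le_of_le_forall (hl : HasStableLength g l) (z : X) {C r : ℝ}
    (h : ∀ n : ℕ, C + n * r ≤ dist z ((g ^ n) z)) : r ≤ l := by
  have h0 : Tendsto (fun n : ℕ => C / n + r) atTop (nhds (0 + r)) :=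
    (tendsto_const_div_atTop_nhds_zero_nat _).add_const _
  rw [zero_add] at h0
  refine le_of_tendsto_of_tendsto h0 (hl z) ?_
  filter_upwards [eventually_gt_atTop 0] with n hn
  have hn' : (0:ℝ) < n := by exact_mod_cast hn
  calc _ = (C + n * r) / n := by field_simp
    _ ≤ _ := by gcongr; exact h n

theorem HasStableLength.inv (hl : HasStableLength g l) : HasStableLength g⁻¹ l := fun z => by
  refine (hl z).congr fun n => ?_
  rw [inv_pow, dist_inv_apply]

theorem HasStableLength.conj (hl : HasStableLength g l) (s : X ≃ᵢ X) :
    HasStableLength (s * g * s⁻¹) l := fun z => by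
  refine (hl (s⁻¹ z)).congr fun n => ?_
  rw [conj_pow, ← s.dist_eq, ← IsometryEquiv.mul_apply s s⁻¹, mul_inv_cancel]; rfl

theorem HasStableLength.pow (hl : HasStableLength g l) {k : ℕ} (hk : k ≠ 0) :
    HasStableLength (g ^ k) (k * l) := fun z => by
  have h1 := ((hl z).comp (tendsto_id.const_mul_atTop' (Nat.pos_of_ne_zero hk))).const_mul (k:ℝ)
  refine h1.congr fun n => ?_
  have : (k:ℝ) ≠ 0 := by exact_mod_cast hk
  simp only [Function.comp, id, Nat.cast_mul, ← pow_mul]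
  rcases eq_or_ne n 0 with rfl | hn
  · simp
  · have : (n:ℝ) ≠ 0 := by exact_mod_cast hn
    field_simp

/-- If squaring increases a displacement, then displacements of iterates grow linearly. -/
theorem HasStableLength.sub_le (hl : HasStableLength g l) (hX : IsDeltaHyperbolic X δ) {B : ℝ}
    {y : X} (hB : 2 * δ < B) (hB0 : 0 ≤ δ) (h : dist y (g y) + B ≤ dist y ((g ^ 2) y)) :
    B - 2 * δ ≤ l := by
  have hfour : ∀ n : ℕ, dist y ((g ^ 2) y) + dist y ((g ^ (n + 1)) y) ≤
      max (dist y (g y) + dist y ((g ^ n) y)) (dist y ((g ^ (n + 2)) y) + dist y (g y))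
        + 2 * δ := by
    intro n
    have h1 := hX y ((g ^ 2) y) (g y) ((g ^ (n + 2)) y)
    have e1 : dist (g y) ((g ^ (n + 2)) y) = dist y ((g ^ (n + 1)) y) := by
      rw [pow_succ' g (n + 1), IsometryEquiv.mul_apply, g.dist_eq]
    have e2 : dist ((g ^ 2) y) ((g ^ (n + 2)) y) = dist y ((g ^ n) y) := by
      rw [add_comm n 2, pow_add, IsometryEquiv.mul_apply, (g ^ 2).dist_eq]
    have e3 : dist ((g ^ 2) y) (g y) = dist y (g y) := by
      rw [pow_two, IsometryEquiv.mul_apply, g.dist_eq, dist_comm]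
    rw [e1, e2, e3] at h1
    exact h1
  have hstep : ∀ n : ℕ, dist y ((g ^ (n + 1)) y) + (B - 2 * δ) ≤ dist y ((g ^ (n + 2)) y) := by
    intro n
    induction n with
    | zero => simp only [zero_add, pow_one]; linarith
    | succ n ih =>
      have h1 := hfour (n + 1)
      rcases max_cases (dist y (g y) + dist y ((g ^ (n + 1)) y))
        (dist y ((g ^ (n + 1 + 2)) y) + dist y (g y)) with ⟨h2, _⟩ | ⟨h2, _⟩ <;>
        rw [h2] at h1 <;> linarith
  refine hl.le_of_le_forall y (C := -(B - 2 * δ)) fun n => ?_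
  induction n with
  | zero => simp; linarith
  | succ n ih =>
    rcases Nat.eq_zero_or_pos n with rfl | hn
    · simp
    · obtain ⟨k, rfl⟩ := Nat.exists_eq_succ_of_ne_zero hn.ne'
      have := hstep k
      push_cast at ih ⊢
      simp only [Nat.succ_eq_add_one] at *
      linarith

theorem HasStableLength.dist_sq_le (hl : HasStableLength g l) (hX : IsDeltaHyperbolic X δ)
    (hδ : 0 < δ) (hl0 : 0 < l) (y : X) : dist y ((g ^ 2) y) ≤ dist y (g y) + l + 2 * δ := by
  by_contra! h
  set B := dist y ((g ^ 2) y) - dist y (g y) with hB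
  have := hl.sub_le hX (B := B) (y := y) (by linarith) hδ.le (by linarith)
  linarith

theorem HasStableLength.le_dist_sq (hl : HasStableLength g l) (hX : IsDeltaHyperbolic X δ)
    (hδ : 0 < δ) (hlδ : 3 * δ ≤ l) (y : X) :
    dist y (g y) + l - 3 * δ ≤ dist y ((g ^ 2) y) := by
  by_contra! h
  have hfour : ∀ n : ℕ, dist y ((g ^ (n + 2)) y) + dist y (g y) ≤
      max (dist y ((g ^ 2) y) + dist y ((g ^ (n + 1)) y)) (dist y (g y) + dist y ((g ^ n) y))
        + 2 * δ := by
    intro n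
    have h1 := hX y ((g ^ (n + 2)) y) ((g ^ 2) y) (g y)
    have e1 : dist (g y) ((g ^ (n + 2)) y) = dist y ((g ^ (n + 1)) y) := by
      rw [pow_succ' g (n + 1), IsometryEquiv.mul_apply, g.dist_eq]
    have e2 : dist ((g ^ 2) y) ((g ^ (n + 2)) y) = dist y ((g ^ n) y) := by
      rw [add_comm n 2, pow_add, IsometryEquiv.mul_apply, (g ^ 2).dist_eq]
    have e3 : dist ((g ^ 2) y) (g y) = dist y (g y) := by
      rw [pow_two, IsometryEquiv.mul_apply, g.dist_eq, dist_comm]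
    rw [dist_comm ((g ^ (n + 2)) y) (g y), dist_comm ((g ^ (n + 2)) y) ((g ^ 2) y), e1, e2,
      e3] at h1
    exact h1
  have hb : ∀ n : ℕ, dist y ((g ^ n) y) ≤ dist y (g y) + n * (l - δ) ∧
      dist y ((g ^ (n + 1)) y) ≤ dist y (g y) + (n + 1 : ℕ) * (l - δ) := by
    intro n
    induction n with
    | zero =>
      simp only [pow_zero, zero_add, pow_one, Nat.cast_zero, Nat.cast_one]
      refine ⟨by simp, by linarith⟩
    | succ n ih =>
      refine ⟨ih.2, ?_⟩
      have h1 := hfour n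
      obtain ⟨i1, i2⟩ := ih
      push_cast at i1 i2 ⊢
      rcases max_cases (dist y ((g ^ 2) y) + dist y ((g ^ (n + 1)) y))
        (dist y (g y) + dist y ((g ^ n) y)) with ⟨h2, _⟩ | ⟨h2, _⟩ <;>
        rw [h2] at h1 <;> simp only [add_assoc, one_add_one_eq_two] at * <;> linarith
  have := hl.le_of_forall_le y fun n => (hb n).1
  linarith

theorem HasStableLength.gromovProd_inv_apply_le (hl : HasStableLength g l)
    (hX : IsDeltaHyperbolic X δ) (hδ : 0 < δ) (hlδ : 3 * δ ≤ l) (y : X) :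
    gromovProd y (g⁻¹ y) (g y) ≤ (dist y (g y) - l + 3 * δ) / 2 := by
  have := hl.le_dist_sq hX hδ hlδ y
  rw [gromovProd_inv_apply]; linarith

theorem HasStableLength.gromovProd_inv_pow_le (hl : HasStableLength g l)
    (hX : IsDeltaHyperbolic X δ) (hδ : 0 < δ) (hlδ : 6 * δ < l) (y : X) (j : ℕ) :
    gromovProd y (g⁻¹ y) ((g ^ (j + 1)) y) ≤ (dist y (g y) - l + 5 * δ) / 2 := by
  have h0 := hl.gromovProd_inv_apply_le hX hδ (by linarith) y
  induction j with
  | zero => rw [zero_add, pow_one]; linarith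
  | succ j ih =>
    have h1 := gromovProd_apply_eq g y ((g ^ (j + 1)) y)
    rw [← IsometryEquiv.mul_apply g, ← pow_succ'] at h1
    rcases gromovProd_le_or hX y (g⁻¹ y) ((g ^ (j + 1 + 1)) y) (g y) with h | h
    · linarith
    · rw [gromovProd_comm] at h
      linarith

theorem HasStableLength.gromovProd_pow_pow_le (hl : HasStableLength g l)
    (hX : IsDeltaHyperbolic X δ) (hδ : 0 < δ) (hlδ : 6 * δ < l) (y : X) (i j : ℕ) :
    gromovProd y (((g ^ i)⁻¹) y) ((g ^ j) y) ≤ (dist y (g y) - l + 7 * δ) / 2 := by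
  have hly : l ≤ dist y (g y) := by simpa using hl.mul_le y 1
  rcases j with _ | j
  · rw [pow_zero]
    change gromovProd y _ y ≤ _
    rw [gromovProd_self_right]; linarith
  rcases i with _ | i
  · rw [pow_zero, inv_one, gromovProd_comm]
    change gromovProd y _ y ≤ _
    rw [gromovProd_self_right]; linarith
  have h0 := hl.gromovProd_inv_pow_le hX hδ hlδ y j
  rcases i with _ | i
  · rw [zero_add, pow_one]; linarith
  have h2 := hl.inv.gromovProd_inv_pow_le hX hδ hlδ y i
  have h1 := gromovProd_apply_eq g⁻¹ y (((g⁻¹) ^ (i + 1)) y)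
  rw [← IsometryEquiv.mul_apply g⁻¹, ← pow_succ', inv_inv, inv_pow, inv_pow] at h1
  rw [inv_inv, inv_pow] at h2
  rw [dist_inv_apply] at h1 h2
  rcases gromovProd_le_or hX y (g⁻¹ y) (((g ^ (i + 1 + 1))⁻¹) y) ((g ^ (j + 1)) y) with h | h
  · linarith
  · linarith

theorem HasStableLength.le_dist_pow_add (hl : HasStableLength g l)
    (hX : IsDeltaHyperbolic X δ) (hδ : 0 < δ) (hlδ : 6 * δ < l) (y : X) (i j : ℕ) :
    dist y ((g ^ i) y) + dist y ((g ^ j) y) - (dist y (g y) - l + 7 * δ) ≤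
      dist y ((g ^ (i + j)) y) := by
  have h := hl.gromovProd_pow_pow_le hX hδ hlδ y i j
  have e : dist (((g ^ i)⁻¹) y) ((g ^ j) y) = dist y ((g ^ (i + j)) y) := by
    rw [← (g ^ i).dist_eq, ← IsometryEquiv.mul_apply (g ^ i) (g ^ i)⁻¹, mul_inv_cancel, pow_add]
    rfl
  rw [gromovProd, e, dist_inv_apply] at h
  linarith

theorem HasStableLength.dist_pow_le (hl : HasStableLength g l)
    (hX : IsDeltaHyperbolic X δ) (hδ : 0 < δ) (hlδ : 6 * δ < l) (y : X) (n : ℕ) :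
    dist y ((g ^ n) y) ≤ n * l + (dist y (g y) - l + 7 * δ) := by
  rcases Nat.eq_zero_or_pos n with rfl | hn
  · have hly : l ≤ dist y (g y) := by simpa using hl.mul_le y 1
    simp; linarith
  set c := dist y (g y) - l + 7 * δ with hc
  have hk : ∀ k : ℕ, c + k * (dist y ((g ^ n) y) - c) ≤ dist y (((g ^ n) ^ k) y) + c := by
    intro k
    induction k with
    | zero => simp
    | succ k ih =>
      have h1 := hl.le_dist_pow_add hX hδ hlδ y (n * k) n
      rw [← pow_mul] at ih ⊢
      rw [Nat.mul_succ]
      push_cast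
      linarith
  have := (hl.pow hn.ne').le_of_le_forall y (C := 0) (r := dist y ((g ^ n) y) - c)
    fun k => by linarith [hk k]
  linarith

end StableLength


/-- A ping-pong set certifying that `u` and `v` generate a free semigroup. -/
def FreePair {X : Type*} [MetricSpace X] (u v : X ≃ᵢ X) : Prop :=
  ∃ Y : Set X, Y.Nonempty ∧ (∀ z ∈ Y, u z ∈ Y) ∧ (∀ z ∈ Y, v z ∈ Y) ∧
    ∀ z ∈ Y, ∀ z' ∈ Y, u z ≠ v z'

section PingPong

variable {X : Type*} [MetricSpace X] {δ : ℝ}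

theorem freePair_of_gromovProd_le (hX : IsDeltaHyperbolic X δ) {p : X} {g h : X ≃ᵢ X} {a : ℝ}
    (ha : 0 ≤ a + δ)
    (h1 : gromovProd p (g⁻¹ p) (g p) ≤ a) (h2 : gromovProd p (g⁻¹ p) (h p) ≤ a)
    (h3 : gromovProd p (h⁻¹ p) (g p) ≤ a) (h4 : gromovProd p (h⁻¹ p) (h p) ≤ a)
    {L : ℝ} (hg : L ≤ dist p (g p)) (hh : L ≤ dist p (h p)) (hL : 2 * (a + δ) < L)
    (h5 : gromovProd p (g p) (h p) < L - a - 2 * δ) : FreePair g h := by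
  refine ⟨{z | gromovProd p (g⁻¹ p) z ≤ a + δ ∧ gromovProd p (h⁻¹ p) z ≤ a + δ}, ⟨p, ?_, ?_⟩,
    ?_, ?_, ?_⟩
  · rw [gromovProd_self_right]; exact ha
  · rw [gromovProd_self_right]; exact ha
  · rintro z ⟨hz1, hz2⟩
    have e := gromovProd_apply_eq g p z
    constructor
    · rcases gromovProd_le_or hX p (g⁻¹ p) (g z) (g p) with k | k
      · linarith
      · rw [gromovProd_comm] at k; linarith
    · rcases gromovProd_le_or hX p (h⁻¹ p) (g z) (g p) with k | k
      · linarith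
      · rw [gromovProd_comm] at k; linarith
  · rintro z ⟨hz1, hz2⟩
    have e := gromovProd_apply_eq h p z
    constructor
    · rcases gromovProd_le_or hX p (g⁻¹ p) (h z) (h p) with k | k
      · linarith
      · rw [gromovProd_comm] at k; linarith
    · rcases gromovProd_le_or hX p (h⁻¹ p) (h z) (h p) with k | k
      · linarith
      · rw [gromovProd_comm] at k; linarith
  · rintro z ⟨hz1, hz2⟩ z' ⟨hz1', hz2'⟩ heq
    have e := gromovProd_apply_eq g p z
    have e' := gromovProd_apply_eq h p z'
    rw [← heq, gromovProd_comm] at e'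
    rcases gromovProd_le_or hX p (g p) (g z) (h p) with k | k <;> linarith

theorem freePair_or_freePair_inv (hX : IsDeltaHyperbolic X δ) {p : X} {g h : X ≃ᵢ X} {a : ℝ}
    (hδ : 0 ≤ δ) (ha : 0 ≤ a)
    (h1 : gromovProd p (g⁻¹ p) (g p) ≤ a) (h2 : gromovProd p (h⁻¹ p) (h p) ≤ a)
    {L : ℝ} (hg : L ≤ dist p (g p)) (hh : L ≤ dist p (h p)) (hL : 2 * (a + 2 * δ) < L)
    (h3 : gromovProd p (g p) (h p) < L - a - 3 * δ)
    (h4 : gromovProd p (g⁻¹ p) (h p) < L - a - 3 * δ) : FreePair g h ∨ FreePair g⁻¹ h := by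
  have hg' : L ≤ dist p (g⁻¹ p) := by rwa [dist_inv_apply]
  have h1' : gromovProd p (g⁻¹⁻¹ p) (g⁻¹ p) ≤ a := by rwa [inv_inv, gromovProd_comm]
  have plus : gromovProd p (g⁻¹ p) (h p) ≤ a + δ → gromovProd p (h⁻¹ p) (g p) ≤ a + δ →
      FreePair g h := fun k1 k2 =>
    freePair_of_gromovProd_le hX (a := a + δ) (by linarith) (by linarith) k1 k2 (by linarith)
      hg hh (by linarith) (by linarith)
  have minus : gromovProd p (g p) (h p) ≤ a + δ → gromovProd p (h⁻¹ p) (g⁻¹ p) ≤ a + δ →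
      FreePair g⁻¹ h := fun k1 k2 =>
    freePair_of_gromovProd_le hX (a := a + δ) (by linarith) (by linarith) (by rwa [inv_inv]) k2
      (by linarith) hg' hh (by linarith) (by linarith)
  by_cases c1 : gromovProd p (g p) (h p) ≤ a + δ
  · by_cases c2 : gromovProd p (g⁻¹ p) (h p) ≤ a + δ
    · rcases gromovProd_le_or hX p (g⁻¹ p) (h⁻¹ p) (g p) with k | k
      · exact Or.inr (minus c1 (by rw [gromovProd_comm]; linarith))
      · exact Or.inl (plus c2 (by linarith))
    · refine Or.inr (minus c1 ?_)
      rcases gromovProd_le_or hX p (h⁻¹ p) (g⁻¹ p) (h p) with k | k <;> linarith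
  · refine Or.inl (plus ?_ ?_)
    · rcases gromovProd_le_or hX p (g⁻¹ p) (h p) (g p) with k | k
      · linarith
      · rw [gromovProd_comm] at k; linarith
    · rcases gromovProd_le_or hX p (h⁻¹ p) (g p) (h p) with k | k <;> linarith

/-- Iterates of two isometries with the same stable length stay close, up to a uniform constant,
as soon as they are at distance at most `2 * l` one step later. -/
theorem dist_pow_pow_le (hX : IsDeltaHyperbolic X δ) (hδ : 0 < δ) {g h : X ≃ᵢ X} {l : ℝ}
    (hg : HasStableLength g l) (hh : HasStableLength h l) (hl : 6 * δ < l) {y : X}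
    (hgy : dist y (g y) ≤ l + 100 * δ) (hhy : dist y (h y) ≤ l + 100 * δ) {n : ℕ}
    (hn : dist ((h ^ (n + 1)) y) ((g ^ (n + 1)) y) ≤ 2 * l) :
    dist ((h ^ n) y) ((g ^ n) y) ≤ 328 * δ := by
  have key : ∀ {f : X ≃ᵢ X}, HasStableLength f l → dist y (f y) ≤ l + 100 * δ →
      dist y ((f ^ n) y) - 54 * δ ≤ gromovProd y ((f ^ n) y) ((f ^ (n + 1)) y) := by
    intro f hf hfy
    have h1 := hf.gromovProd_pow_pow_le hX hδ hl y n 1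
    have h2 := gromovProd_apply_eq (f ^ n) y ((f ^ 1) y)
    rw [← IsometryEquiv.mul_apply (f ^ n), ← pow_add] at h2
    linarith
  have k1 := key hg hgy
  have k2 := key hh hhy
  have a1 := hg.mul_le y (n + 1)
  have a2 := hh.mul_le y (n + 1)
  have b1 := hg.mul_le y n
  have b2 := hh.mul_le y n
  have c1 := hg.dist_pow_le hX hδ hl y n
  have c2 := hh.dist_pow_le hX hδ hl y n
  have k3 : n * l ≤ gromovProd y ((h ^ (n + 1)) y) ((g ^ (n + 1)) y) := by
    rw [gromovProd]; push_cast at a1 a2; linarith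
  have k4 : n * l - 56 * δ ≤ gromovProd y ((h ^ n) y) ((g ^ n) y) := by
    rcases gromovProd_le_or hX y ((h ^ n) y) ((h ^ (n + 1)) y) ((g ^ n) y) with k | k
    · linarith
    · rcases gromovProd_le_or hX y ((h ^ (n + 1)) y) ((g ^ (n + 1)) y) ((g ^ n) y) with k' | k'
      · linarith
      · rw [gromovProd_comm] at k'
        linarith
  rw [gromovProd] at k4
  linarith

theorem freePair_sq_of_gromovProd_le (hX : IsDeltaHyperbolic X δ) (hδ : 0 < δ) {g h : X ≃ᵢ X}
    {l : ℝ} (hg : HasStableLength g l) (hh : HasStableLength h l) (hl : 2000 * δ ≤ l) {p : X}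
    (hgp : dist p ((g ^ 2) p) ≤ 2 * l + 764 * δ) (hhp : dist p ((h ^ 2) p) ≤ 2 * l + 764 * δ)
    (h1 : gromovProd p ((g ^ 2) p) ((h ^ 2) p) ≤ l + 1000 * δ)
    (h2 : gromovProd p ((g ^ 2)⁻¹ p) ((h ^ 2) p) ≤ l + 1000 * δ) :
    FreePair (g ^ 2) (h ^ 2) ∨ FreePair (g ^ 2)⁻¹ (h ^ 2) := by
  have a1 := hg.mul_le p 2
  have a2 := hh.mul_le p 2
  have b1 := hg.mul_le p (2 * 2)
  have b2 := hh.mul_le p (2 * 2)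
  push_cast at a1 a2 b1 b2
  refine freePair_or_freePair_inv hX hδ.le (a := 764 * δ) (by linarith) ?_ ?_ (L := 2 * l)
    (by linarith) (by linarith) (by linarith) (by linarith) (by linarith)
  · rw [gromovProd_inv_apply, ← pow_mul]; linarith
  · rw [gromovProd_inv_apply, ← pow_mul]; linarith

theorem freePair_of_first_divergence (hX : IsDeltaHyperbolic X δ) (hδ : 0 < δ) {g h : X ≃ᵢ X}
    {l : ℝ} (hg : HasStableLength g l) (hh : HasStableLength h l) (hl : 2000 * δ ≤ l) {y : X}
    (hgy : dist y (g y) ≤ l + 100 * δ) (hhy : dist y (h y) ≤ l + 100 * δ) {n : ℕ}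
    (h0 : dist ((h ^ n) y) ((g ^ n) y) ≤ 328 * δ)
    (h1 : dist ((h ^ (n + 1)) y) ((g ^ (n + 1)) y) ≤ 328 * δ)
    (h3 : 2 * l < dist ((h ^ (n + 3)) y) ((g ^ (n + 3)) y)) :
    FreePair (g ^ 2) (h ^ 2) ∨ FreePair (g ^ 2)⁻¹ (h ^ 2) := by
  set p := (g ^ (n + 1)) y with hp
  set q := (h ^ (n + 1)) y with hq
  have hl6 : 6 * δ < l := by linarith
  have g2 := hg.dist_pow_le hX hδ hl6 y 2
  have hq2 := hh.dist_pow_le hX hδ hl6 y 2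
  push_cast at g2 hq2
  have eg : dist p ((g ^ 2) p) = dist y ((g ^ 2) y) := by
    rw [hp, ← IsometryEquiv.mul_apply, (Commute.pow_pow_self g 2 (n + 1)).eq,
      IsometryEquiv.mul_apply, (g ^ (n + 1)).dist_eq]
  have eh : dist q ((h ^ 2) q) = dist y ((h ^ 2) y) := by
    rw [hq, ← IsometryEquiv.mul_apply, (Commute.pow_pow_self h 2 (n + 1)).eq,
      IsometryEquiv.mul_apply, (h ^ (n + 1)).dist_eq]
  have e3 : (g ^ 2) p = (g ^ (n + 3)) y := by
    rw [hp, ← IsometryEquiv.mul_apply, ← pow_add]; congr 2; ring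
  have e4 : (h ^ 2) q = (h ^ (n + 3)) y := by
    rw [hq, ← IsometryEquiv.mul_apply, ← pow_add]; congr 2; ring
  have hpq : dist ((h ^ 2) p) ((h ^ 2) q) ≤ 328 * δ := by
    rw [(h ^ 2).dist_eq, dist_comm]; exact h1
  have hhp : dist p ((h ^ 2) p) ≤ 2 * l + 764 * δ := by
    have := dist_triangle4 p q ((h ^ 2) q) ((h ^ 2) p)
    rw [dist_comm p q, dist_comm ((h ^ 2) q)] at this
    linarith
  refine freePair_sq_of_gromovProd_le hX hδ hg hh hl (p := p) (by linarith) hhp ?_ ?_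
  · have t := dist_triangle ((h ^ 2) q) ((h ^ 2) p) ((g ^ 2) p)
    rw [← e3, ← e4] at h3
    rw [dist_comm ((h ^ 2) q) ((h ^ 2) p)] at t
    rw [gromovProd, dist_comm ((g ^ 2) p) ((h ^ 2) p)]
    linarith
  · have t0 := hh.mul_le y 3
    push_cast at t0
    set p' := (g ^ n) y with hp'
    set q' := (h ^ n) y with hq'
    have t1 : dist q' ((h ^ 2) q) = dist y ((h ^ 3) y) := by
      rw [e4, hq', pow_add, IsometryEquiv.mul_apply, (h ^ n).dist_eq]
    have t2 : dist p' ((g ^ 2)⁻¹ p) = dist y (g y) := by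
      have : p = (g ^ 2) ((g⁻¹) p') := by
        rw [hp, hp', ← IsometryEquiv.mul_apply, ← IsometryEquiv.mul_apply]
        congr 1; group
      rw [this, ← IsometryEquiv.mul_apply (g ^ 2)⁻¹, inv_mul_cancel]
      change dist p' (g⁻¹ p') = _
      rw [dist_inv_apply, hp', ← IsometryEquiv.mul_apply, ← pow_succ', pow_succ,
        IsometryEquiv.mul_apply, (g ^ n).dist_eq]
    have t3 := dist_triangle4 q' p' ((g ^ 2)⁻¹ p) ((h ^ 2) q)
    have t4 := dist_triangle ((g ^ 2)⁻¹ p) ((h ^ 2) p) ((h ^ 2) q)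
    rw [gromovProd, dist_inv_apply]
    linarith

end PingPong


section Dichotomy

variable {X : Type*} [MetricSpace X] {δ : ℝ}

theorem freePair_of_near_min {σ : X → X → ℝ → X} (hσ : IsGCB σ)
    (hX : IsDeltaHyperbolic X δ) (hδ : 0 < δ) {g h : X ≃ᵢ X} {l : ℝ}
    (hg : HasStableLength g l) (hh : HasStableLength h l) (hl : 2000 * δ ≤ l) {y : X} {m : ℝ}
    (hm : l + 100 * δ ≤ m) (hgy : dist y (g y) ≤ m) (hhy : dist y (h y) ≤ m)
    (hmin : ∀ z, m - 2 * δ < dist z (g z) ∨ m - 2 * δ < dist z (h z)) : FreePair g h := by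
  obtain ⟨t, ht, t', ht', h1, h2, h3⟩ := exists_gromovProd_lt_of_near_min hσ hX hδ
    (T := {g, g⁻¹, h, h⁻¹}) (by simp) (y := y) (m := m) (by linarith)
    (by simp only [Set.mem_insert_iff, Set.mem_singleton_iff]
        rintro t (rfl | rfl | rfl | rfl) <;> simpa [dist_inv_apply])
    (fun z => by
      rcases hmin z with hz | hz
      · exact ⟨g, by simp, hz⟩
      · exact ⟨h, by simp, hz⟩)
  have low : ∀ {f : X ≃ᵢ X}, HasStableLength f l → m - 10 * δ < dist y (f y) →
      44 * δ < gromovProd y (f⁻¹ y) (f y) := by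
    intro f hf hfy
    have := hf.dist_sq_le hX hδ (by linarith) y
    rw [gromovProd_inv_apply]; linarith
  have self : ∀ f : X ≃ᵢ X, gromovProd y (f y) (f y) = dist y (f y) := by
    intro f; rw [gromovProd, dist_self]; ring
  have main : ∀ a b : X ≃ᵢ X, (a = g ∨ a = g⁻¹) → (b = h ∨ b = h⁻¹) →
      m - 10 * δ < dist y (a y) → m - 10 * δ < dist y (b y) →
      gromovProd y (a y) (b y) < 4 * δ → FreePair g h := by
    intro a b hag hbh ha hb hab
    have hga : m - 10 * δ < dist y (g y) := by
      rcases hag with rfl | rfl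
      · exact ha
      · rwa [dist_inv_apply] at ha
    have hhb : m - 10 * δ < dist y (h y) := by
      rcases hbh with rfl | rfl
      · exact hb
      · rwa [dist_inv_apply] at hb
    have lg := low hg hga
    have lh := low hh hhb
    have la : 44 * δ < gromovProd y (a⁻¹ y) (a y) := by
      rcases hag with rfl | rfl
      · exact lg
      · rwa [inv_inv, gromovProd_comm]
    have lb : 44 * δ < gromovProd y (b⁻¹ y) (b y) := by
      rcases hbh with rfl | rfl
      · exact lh
      · rwa [inv_inv, gromovProd_comm]
    have c1 : gromovProd y (a⁻¹ y) (b y) ≤ 6 * δ := by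
      by_contra hc
      rcases gromovProd_le_or hX y (a y) (a⁻¹ y) (b y) with k | k
      · rw [gromovProd_comm] at k; linarith
      · linarith
    have c2 : gromovProd y (a y) (b⁻¹ y) ≤ 6 * δ := by
      by_contra hc
      rcases gromovProd_le_or hX y (a y) (b⁻¹ y) (b y) with k | k <;> linarith
    have c3 : gromovProd y (a⁻¹ y) (b⁻¹ y) ≤ 6 * δ := by
      by_contra hc
      rcases gromovProd_le_or hX y (a y) (a⁻¹ y) (b y) with k | k
      · rw [gromovProd_comm] at k; linarith
      · rcases gromovProd_le_or hX y (a⁻¹ y) (b⁻¹ y) (b y) with k' | k' <;> linarith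
    have cross : gromovProd y (g y) (h y) ≤ 6 * δ ∧ gromovProd y (g⁻¹ y) (h y) ≤ 6 * δ ∧
        gromovProd y (g y) (h⁻¹ y) ≤ 6 * δ := by
      rcases hag with rfl | rfl <;> rcases hbh with rfl | rfl <;>
        (try simp only [inv_inv] at c1 c2 c3) <;> exact ⟨by linarith, by linarith, by linarith⟩
    have ug := hg.gromovProd_inv_apply_le hX hδ (by linarith) y
    have uh := hh.gromovProd_inv_apply_le hX hδ (by linarith) y
    refine freePair_of_gromovProd_le hX (a := (m - l + 3 * δ) / 2) (by linarith) (by linarith)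
      (by linarith) (by rw [gromovProd_comm]; linarith) (by linarith) hga.le hhb.le
      (by linarith) (by linarith)
  have nsame : ∀ {f a b : X ≃ᵢ X}, HasStableLength f l → (a = f ∨ a = f⁻¹) →
      (b = f ∨ b = f⁻¹) → m - 10 * δ < dist y (a y) → gromovProd y (a y) (b y) < 4 * δ →
      False := by
    intro f a b hf ha hb h1 h2
    rcases ha with rfl | rfl <;> rcases hb with rfl | rfl
    · rw [self] at h2; linarith
    · have := low hf h1
      rw [gromovProd_comm] at h2; linarith
    · rw [dist_inv_apply] at h1
      have := low hf h1
      linarith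
    · rw [self] at h2; linarith
  simp only [Set.mem_insert_iff, Set.mem_singleton_iff] at ht ht'
  rw [← or_assoc] at ht ht'
  rcases ht with ht | ht <;> rcases ht' with ht' | ht'
  · exact (nsame hg ht ht' h1 h3).elim
  · exact main t t' ht ht' h1 h2 h3
  · exact main t' t ht' ht h2 h1 (by rwa [gromovProd_comm])
  · exact (nsame hh ht ht' h1 h3).elim

theorem exists_pow_eq_pow {Γ : Subgroup (X ≃ᵢ X)} (hd : IsDiscreteSubgroup Γ) {g h : X ≃ᵢ X}
    (hg : g ∈ Γ) (hh : h ∈ Γ) {y : X} {C : ℝ}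
    (hC : ∀ n : ℕ, dist ((h ^ n) y) ((g ^ n) y) ≤ C) : ∃ k : ℕ, 0 < k ∧ h ^ k = g ^ k := by
  have hmaps : Set.MapsTo (fun n : ℕ => (g ^ n)⁻¹ * h ^ n) Set.univ
      {f : X ≃ᵢ X | f ∈ Γ ∧ dist y (f y) ≤ C} := by
    intro n _
    refine ⟨Γ.mul_mem (Γ.inv_mem (Γ.pow_mem hg n)) (Γ.pow_mem hh n), ?_⟩
    rw [← (g ^ n).dist_eq, ← IsometryEquiv.mul_apply (g ^ n), mul_inv_cancel_left, dist_comm]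
    exact hC n
  obtain ⟨m, -, n, -, hmn, heq⟩ :=
    Set.infinite_univ.exists_lt_map_eq_of_mapsTo hmaps (hd y C)
  refine ⟨n - m, by omega, ?_⟩
  have e1 : h ^ n = h ^ (n - m) * h ^ m := by rw [← pow_add]; congr 1; omega
  have e2 : g ^ n = g ^ (n - m) * g ^ m := by rw [← pow_add]; congr 1; omega
  have e3 : h ^ n * (h ^ m)⁻¹ = g ^ n * (g ^ m)⁻¹ := by
    have e4 : h ^ m = g ^ m * ((g ^ n)⁻¹ * h ^ n) := inv_mul_eq_iff_eq_mul.1 heq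
    rw [e4]; group
  rwa [e1, e2, mul_inv_cancel_right, mul_inv_cancel_right] at e3

theorem zpow_freePair_or_pow_eq {σ : X → X → ℝ → X} (hσ : IsGCB σ)
    (hX : IsDeltaHyperbolic X δ) (hδ : 0 < δ) [Nonempty X] {Γ : Subgroup (X ≃ᵢ X)}
    (hd : IsDiscreteSubgroup Γ) {g h : X ≃ᵢ X} (hgΓ : g ∈ Γ) (hhΓ : h ∈ Γ) {l : ℝ}
    (hg : HasStableLength g l) (hh : HasStableLength h l) (hl : 2000 * δ ≤ l) :
    (∃ i j : ℤ, |i| ≤ 2 ∧ |j| ≤ 2 ∧ FreePair (g ^ i) (h ^ j)) ∨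
      ∃ k : ℕ, 0 < k ∧ (h ^ k = g ^ k ∨ h ^ k = (g ^ k)⁻¹) := by
  obtain ⟨y, m, hy, hmin⟩ := exists_near_min (T := {g, h}) (by simp) (by simp)
    (η := 2 * δ) (by linarith)
  simp only [Set.mem_insert_iff, Set.mem_singleton_iff, forall_eq_or_imp, forall_eq,
    exists_eq_or_imp, exists_eq_left] at hy hmin
  obtain ⟨hgy, hhy⟩ := hy
  rcases le_total (l + 100 * δ) m with hm | hm
  · exact Or.inl ⟨1, 1, by norm_num, by norm_num, by
      simpa using freePair_of_near_min hσ hX hδ hg hh hl hm hgy hhy hmin⟩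
  have hgy' : dist y (g y) ≤ l + 100 * δ := hgy.trans hm
  have hhy' : dist y (h y) ≤ l + 100 * δ := hhy.trans hm
  have hl6 : 6 * δ < l := by linarith
  have finish : ∀ f : X ≃ᵢ X, (f = g ∨ f = g⁻¹) →
      (FreePair (f ^ 2) (h ^ 2) ∨ FreePair (f ^ 2)⁻¹ (h ^ 2)) →
      ∃ i j : ℤ, |i| ≤ 2 ∧ |j| ≤ 2 ∧ FreePair (g ^ i) (h ^ j) := by
    rintro f (rfl | rfl) (hf | hf)
    · exact ⟨2, 2, by norm_num, by norm_num, by exact_mod_cast hf⟩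
    · exact ⟨-2, 2, by norm_num, by norm_num, by simpa using hf⟩
    · exact ⟨-2, 2, by norm_num, by norm_num, by simpa using hf⟩
    · exact ⟨2, 2, by norm_num, by norm_num, by simpa using hf⟩
  have side : ∀ f : X ≃ᵢ X, (f = g ∨ f = g⁻¹) → HasStableLength f l →
      dist y (f y) ≤ l + 100 * δ → dist (h y) (f y) ≤ 328 * δ →
      (∃ i j : ℤ, |i| ≤ 2 ∧ |j| ≤ 2 ∧ FreePair (g ^ i) (h ^ j)) ∨
        ∃ k : ℕ, 0 < k ∧ h ^ k = f ^ k := by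
    intro f hfg hf hfy h1
    have hfΓ : f ∈ Γ := by
      rcases hfg with rfl | rfl
      · exact hgΓ
      · exact Γ.inv_mem hgΓ
    by_cases hall : ∀ n : ℕ, dist ((h ^ n) y) ((f ^ n) y) ≤ 328 * δ
    · exact Or.inr (exists_pow_eq_pow hd hfΓ hhΓ hall)
    left
    by_contra hno
    refine hall fun n => ?_
    have hpair : ∀ n : ℕ, dist ((h ^ n) y) ((f ^ n) y) ≤ 328 * δ ∧
        dist ((h ^ (n + 1)) y) ((f ^ (n + 1)) y) ≤ 328 * δ := by
      intro n
      induction n with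
      | zero =>
        refine ⟨?_, by simpa using h1⟩
        simp only [pow_zero, dist_self]; positivity
      | succ n ih =>
        refine ⟨ih.2, dist_pow_pow_le hX hδ hf hh hl6 hfy hhy' ?_⟩
        by_contra! hcon
        exact hno (finish f hfg
          (freePair_of_first_divergence hX hδ hf hh hl hfy hhy' ih.1 ih.2 hcon))
    exact (hpair n).1
  by_cases c1 : dist (h y) (g y) ≤ 328 * δ
  · rcases side g (Or.inl rfl) hg hgy' c1 with h1 | ⟨k, hk, h1⟩
    · exact Or.inl h1
    · exact Or.inr ⟨k, hk, Or.inl h1⟩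
  have hgy'' : dist y (g⁻¹ y) ≤ l + 100 * δ := by rwa [dist_inv_apply]
  by_cases c2 : dist (h y) (g⁻¹ y) ≤ 328 * δ
  · rcases side g⁻¹ (Or.inr rfl) hg.inv hgy'' c2 with h1 | ⟨k, hk, h1⟩
    · exact Or.inl h1
    · exact Or.inr ⟨k, hk, Or.inr (by rw [h1, inv_pow])⟩
  left
  have far : ∀ f : X ≃ᵢ X, HasStableLength f l → dist y (f y) ≤ l + 100 * δ →
      ¬ dist (h y) (f y) ≤ 328 * δ → gromovProd y ((f ^ 2) y) ((h ^ 2) y) ≤ l + 1000 * δ := by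
    intro f hf hfy hc
    have k1 : 2 * l < dist ((h ^ 2) y) ((f ^ 2) y) := by
      by_contra! hcon
      exact hc (by simpa using dist_pow_pow_le hX hδ hf hh hl6 hfy hhy' (n := 1) hcon)
    have k2 := hf.dist_pow_le hX hδ hl6 y 2
    have k3 := hh.dist_pow_le hX hδ hl6 y 2
    push_cast at k2 k3
    rw [gromovProd, dist_comm ((f ^ 2) y) ((h ^ 2) y)]
    linarith
  have k2 := hg.dist_pow_le hX hδ hl6 y 2
  have k3 := hh.dist_pow_le hX hδ hl6 y 2
  push_cast at k2 k3
  refine finish g (Or.inl rfl) (freePair_sq_of_gromovProd_le hX hδ hg hh hl (p := y)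
    (by linarith) (by linarith) (far g hg hgy' c1) ?_)
  rw [← inv_pow]
  exact far g⁻¹ hg.inv hgy'' c2

end Dichotomy


section Lineal

variable {X : Type*} [MetricSpace X] {δ : ℝ}

theorem HasStableLength.gromovProd_le_of_near_orbit {f : X ≃ᵢ X} {l : ℝ}
    (hf : HasStableLength f l) (hX : IsDeltaHyperbolic X δ) (hδ : 0 < δ) (hl : 10 * δ < l)
    {p z : X} (hz : dist p z ≤ dist z (f p) + δ) (m : ℕ) :
    gromovProd p z ((f ^ (m + 1)) p) ≤ (dist p (f p) + 3 * δ) / 2 := by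
  have h1 : gromovProd p z (f p) ≤ (dist p (f p) + δ) / 2 := by rw [gromovProd]; linarith
  have h2 := hf.gromovProd_pow_pow_le hX hδ (by linarith) p 1 m
  have h3 := gromovProd_apply_eq f p ((f ^ m) p)
  rw [← IsometryEquiv.mul_apply f, ← pow_succ'] at h3
  rw [pow_one] at h2
  rcases gromovProd_le_or hX p z ((f ^ (m + 1)) p) (f p) with k | k
  · linarith
  · rw [gromovProd_comm] at k; linarith

theorem dist_zpow_apply_zpow (G : X ≃ᵢ X) (i j : ℤ) (y : X) :
    dist ((G ^ j) y) ((G ^ i) ((G ^ j) y)) = dist y ((G ^ i) y) := by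
  rw [← IsometryEquiv.mul_apply, ← zpow_add, add_comm, zpow_add, IsometryEquiv.mul_apply,
    (G ^ j).dist_eq]

/-- An isometry normalizing the cyclic group generated by a hyperbolic element `G` moves every
point close to the orbit of that point under this cyclic group. -/
theorem HasStableLength.exists_dist_zpow_le {G w : X ≃ᵢ X} {l : ℝ}
    (hG : HasStableLength G l) (hX : IsDeltaHyperbolic X δ) (hδ : 0 < δ) (hl : 10 * δ < l)
    (hw : w⁻¹ * G * w = G ∨ w⁻¹ * G * w = G⁻¹) (y : X) :
    ∃ j : ℤ, dist (w y) ((G ^ j) y) ≤ dist y (G y) + 4 * δ := by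
  set z := w y with hz
  set A : Set ℝ := Set.range fun j : ℤ => dist ((G ^ j) y) z with hA
  have hbdd : BddBelow A := ⟨0, by rintro _ ⟨j, rfl⟩; exact dist_nonneg⟩
  obtain ⟨_, ⟨j, rfl⟩, hj⟩ := Real.lt_sInf_add_pos (Set.range_nonempty _ : A.Nonempty) hδ
  have hmin : ∀ i : ℤ, dist ((G ^ j) y) z ≤ dist z ((G ^ i) y) + δ := fun i => by
    have := csInf_le hbdd (Set.mem_range_self i)
    simp only at this hj
    rw [dist_comm z]; linarith
  refine ⟨j, ?_⟩
  set p := (G ^ j) y with hp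
  have hfp : dist p (G p) = dist y (G y) := by simpa using dist_zpow_apply_zpow G 1 j y
  have m1 : dist p z ≤ dist z (G p) + δ := by
    have := hmin (1 + j)
    rwa [zpow_one_add, IsometryEquiv.mul_apply] at this
  have m2 : dist p z ≤ dist z (G⁻¹ p) + δ := by
    have := hmin (-1 + j)
    rwa [zpow_add, IsometryEquiv.mul_apply, zpow_neg_one] at this
  obtain ⟨m, hm⟩ := exists_nat_gt ((dist y (G y) + 4 * δ) / l)
  rw [div_lt_iff₀ (by linarith)] at hm
  have k1 := hG.gromovProd_le_of_near_orbit hX hδ hl m1 m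
  have k2 := hG.inv.gromovProd_le_of_near_orbit hX hδ hl m2 m
  have hAm : dist p ((G ^ (m + 1)) p) = dist y ((G ^ (m + 1)) y) := by
    have := dist_zpow_apply_zpow G ((m + 1 : ℕ) : ℤ) j y
    rwa [zpow_natCast] at this
  have hAm0 := hG.mul_le y (m + 1)
  push_cast at hAm0
  have hzz : dist z ((G ^ (m + 1)) z) = dist y ((G ^ (m + 1)) y) := by
    have e : dist z ((G ^ (m + 1)) z) = dist y (((w⁻¹ * G * w) ^ (m + 1)) y) := by
      have := conj_pow (a := w⁻¹) (b := G) (i := m + 1)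
      rw [inv_inv] at this
      rw [this, hz, ← w.dist_eq y]
      simp only [← IsometryEquiv.mul_apply, mul_assoc, mul_inv_cancel_left]
    rw [e]
    rcases hw with h | h
    · rw [h]
    · rw [h, inv_pow, dist_inv_apply]
  have e4 : dist z (((G⁻¹) ^ (m + 1)) p) = dist p ((G ^ (m + 1)) z) := by
    rw [← (G ^ (m + 1)).dist_eq, inv_pow, ← IsometryEquiv.mul_apply (G ^ (m + 1)) (_)⁻¹,
      mul_inv_cancel, dist_comm]
    rfl
  rw [gromovProd] at k1 k2
  rw [e4, inv_pow, dist_inv_apply, dist_inv_apply] at k2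
  have h4 := hX z ((G ^ (m + 1)) p) p ((G ^ (m + 1)) z)
  rw [(G ^ (m + 1)).dist_eq, hzz, dist_comm ((G ^ (m + 1)) p) p, dist_comm z p] at h4
  rw [dist_comm z p]
  rcases max_cases (dist p z + dist p z)
    (dist y ((G ^ (m + 1)) y) + dist p ((G ^ (m + 1)) p)) with ⟨h, _⟩ | ⟨h, _⟩ <;>
    rw [h] at h4 <;> linarith

theorem isVirtuallyNilpotent_of_forall_conj_eq [Nonempty X] (hX : IsDeltaHyperbolic X δ)
    (hδ : 0 < δ) {Γ : Subgroup (X ≃ᵢ X)} (hd : IsDiscreteSubgroup Γ) {G : X ≃ᵢ X} (hGΓ : G ∈ Γ)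
    {l : ℝ} (hG : HasStableLength G l) (hl : 10 * δ < l) {S : Set (X ≃ᵢ X)} (hS : S ⊆ Γ)
    (hconj : ∀ s ∈ S, s * G * s⁻¹ = G ∨ s * G * s⁻¹ = G⁻¹) :
    IsVirtuallyNilpotent (Subgroup.closure S) := by
  obtain ⟨y⟩ := ‹Nonempty X›
  have hall : ∀ w ∈ Subgroup.closure S, w * G * w⁻¹ = G ∨ w * G * w⁻¹ = G⁻¹ := by
    have hinv : ∀ w : X ≃ᵢ X, w * G⁻¹ * w⁻¹ = (w * G * w⁻¹)⁻¹ := fun w => by group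
    intro w hw
    induction hw using Subgroup.closure_induction with
    | mem x hx => exact hconj x hx
    | one => left; group
    | mul a b _ _ ha hb =>
      have e : a * b * G * (a * b)⁻¹ = a * (b * G * b⁻¹) * a⁻¹ := by group
      rw [e]
      rcases hb with h | h
      · rw [h]; exact ha
      · rw [h, hinv]
        rcases ha with h' | h'
        · right; rw [h']
        · left; rw [h', inv_inv]
    | inv a _ ha =>
      rw [inv_inv]
      rcases ha with h | h
      · left; nth_rewrite 1 [← h]; group
      · right
        have e : G = a * G⁻¹ * a⁻¹ := by rw [hinv, h, inv_inv]
        nth_rewrite 1 [e]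
        group
  have hcyc : IsVirtuallyNilpotent (Subgroup.zpowers G) :=
    have : Group.IsNilpotent (Subgroup.zpowers G) :=
      @CommGroup.isNilpotent (Subgroup.zpowers G) IsMulCommutative.instCommGroup
    ⟨⊤, inferInstance, inferInstance⟩
  refine hcyc.of_relIndex (relIndex_ne_zero_of_finite_cover
    (hd y (dist y (G y) + 4 * δ)) fun w hw => ?_)
  have hwΓ : w ∈ Γ := (Subgroup.closure_le _).2 hS hw
  have hw' : w⁻¹⁻¹ * G * w⁻¹ = G ∨ w⁻¹⁻¹ * G * w⁻¹ = G⁻¹ := by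
    rw [inv_inv]; exact hall w hw
  obtain ⟨j, hj⟩ := hG.exists_dist_zpow_le hX hδ hl hw' y
  refine ⟨w * G ^ j, ⟨Γ.mul_mem hwΓ (Γ.zpow_mem hGΓ j), ?_⟩, ?_⟩
  · rw [← (w⁻¹).dist_eq, ← IsometryEquiv.mul_apply w⁻¹, inv_mul_cancel_left]
    exact hj
  · rw [mul_inv_rev, inv_mul_cancel_right]
    exact Subgroup.inv_mem _ (Subgroup.zpow_mem_zpowers G j)

end Lineal


theorem dist_pow_apply_le {X : Type*} [MetricSpace X] (g : X ≃ᵢ X) (x : X) (n : ℕ) :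
    dist x ((g ^ n) x) ≤ n * dist x (g x) := by
  induction n with
  | zero => simp
  | succ n ih =>
    rw [pow_succ]
    have := dist_mul_apply_le (g ^ n) g x
    push_cast
    linarith

theorem dist_zpow_apply_le_two_mul {X : Type*} [MetricSpace X] (g : X ≃ᵢ X) (x : X) {i : ℤ}
    (hi : |i| ≤ 2) : dist x ((g ^ i) x) ≤ 2 * dist x (g x) := by
  have h1 : dist x ((g ^ i) x) = dist x ((g ^ i.natAbs) x) := by
    rcases Int.natAbs_eq i with h | h
    · nth_rewrite 1 [h]; rw [zpow_natCast]
    · nth_rewrite 1 [h]; rw [zpow_neg, zpow_natCast, dist_inv_apply]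
  have h2 : (i.natAbs : ℝ) ≤ 2 := by
    have : i.natAbs ≤ 2 := by rw [Int.abs_eq_natAbs] at hi; omega
    exact_mod_cast this
  rw [h1]
  exact (dist_pow_apply_le g x _).trans (by gcongr)

theorem dist_le_of_mem_pow {X : Type*} [MetricSpace X] {Γ : Subgroup (X ≃ᵢ X)} {x : X} {R : ℝ}
    {n : ℕ} {w : X ≃ᵢ X} (hw : w ∈ {g : X ≃ᵢ X | g ∈ Γ ∧ dist x (g x) ≤ R} ^ n) :
    w ∈ Γ ∧ dist x (w x) ≤ n * R := by
  induction n generalizing w with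
  | zero =>
    rw [pow_zero, Set.mem_one] at hw
    subst hw
    exact ⟨Γ.one_mem, by simp⟩
  | succ n ih =>
    rw [pow_succ] at hw
    obtain ⟨a, ha, b, hb, rfl⟩ := hw
    obtain ⟨h1, h2⟩ := ih ha
    refine ⟨Γ.mul_mem h1 hb.1, (dist_mul_apply_le a b x).trans ?_⟩
    have := hb.2
    push_cast
    linarith

/-- **Uniform Tits alternative**: if an almost stabilizer is not virtually nilpotent then it
contains a free semigroup generated by two elements of controlled displacement. -/
theorem exists_freePair (Φ : ℝ → ℝ → ℕ) {δ : ℝ} (hδ : 0 < δ) :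
    ∃ N : ℕ, 0 < N ∧ ∀ (X : Type*) [MetricSpace X] (σ : X → X → ℝ → X), IsGCB σ →
      IsDeltaHyperbolic X δ → HasNetBound X Φ → ∀ Γ : Subgroup (X ≃ᵢ X),
      (∀ g ∈ Γ, IsSigmaIsometry σ g) → IsDiscreteSubgroup Γ → ∀ (x : X) (R : ℝ), 0 ≤ R →
      ¬ IsVirtuallyNilpotent (almostStabilizer Γ R x) →
      ∃ u ∈ Γ, ∃ v ∈ Γ, FreePair u v ∧ dist x (u x) ≤ N * R ∧ dist x (v x) ≤ N * R := by
  obtain ⟨M, hM⟩ := exists_isVirtuallyNilpotent_closure Φ (2100 * δ)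
  refine ⟨4 * M + 8, by omega, ?_⟩
  intro X _ σ hσ hX hΦ Γ hΓ hd x R hR hvn
  have : Nonempty X := ⟨x⟩
  set S : Set (X ≃ᵢ X) := {g : X ≃ᵢ X | g ∈ Γ ∧ dist x (g x) ≤ R} with hS
  have hSΓ : S ⊆ Γ := fun g hg => hg.1
  have hS1 : (1 : X ≃ᵢ X) ∈ S := ⟨Γ.one_mem, by simpa⟩
  have hSinv : ∀ g ∈ S, g⁻¹ ∈ S := fun g hg => ⟨Γ.inv_mem hg.1, by
    rw [dist_inv_apply]; exact hg.2⟩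
  have hSinv' : S⁻¹ = S := Set.Subset.antisymm
    (fun g hg => by simpa using hSinv _ (Set.mem_inv.1 hg)) fun g hg => Set.mem_inv.2 (hSinv g hg)
  by_contra hno
  refine hvn ?_
  by_cases hsmall : ∃ y : X, ∀ g ∈ S ^ (M + 1), dist y (g y) ≤ 2100 * δ
  · obtain ⟨y, hy⟩ := hsmall
    exact hM X σ hσ hΦ Γ hΓ hd y S hSΓ hS1 hSinv hy
  push Not at hsmall
  have hTfin : (S ^ (M + 1)).Finite :=
    (hd x ((M + 1 : ℕ) * R)).subset fun g hg => dist_le_of_mem_pow hg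
  obtain ⟨y, m, hy, hmin⟩ := exists_near_min (T := S ^ (M + 1)) ⟨1, Set.one_mem_pow hS1⟩ hTfin
    (η := 2 * δ) (by linarith)
  have hm : 2100 * δ ≤ m := by
    obtain ⟨t, ht, h⟩ := hsmall y
    exact h.le.trans (hy t ht)
  obtain ⟨g, hg, hgy⟩ := exists_lt_dist_sq_of_near_min hσ hX hδ (T := S ^ (M + 1))
    (fun t ht => by
      rw [← hSinv', inv_pow, Set.mem_inv, inv_inv]; exact ht) hm hy hmin
  have hgS : g ∈ S ^ (2 * (M + 1)) := by
    rcases hg with h | h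
    · exact Set.pow_subset_pow_right hS1 (by omega) h
    · rwa [two_mul, pow_add]
  obtain ⟨hgΓ, hgx⟩ := dist_le_of_mem_pow hgS
  obtain ⟨l, hgl⟩ := exists_hasStableLength g
  have hl : 2000 * δ ≤ l := by
    have := hgl.sub_le hX (B := 2002 * δ) (y := y) (by linarith) hδ.le hgy
    linarith
  have hpow : ∀ s ∈ S, ∃ k : ℕ, 0 < k ∧
      (s * g ^ k * s⁻¹ = g ^ k ∨ s * g ^ k * s⁻¹ = (g ^ k)⁻¹) := by
    intro s hs
    have hsg : s * g * s⁻¹ ∈ Γ := Γ.mul_mem (Γ.mul_mem hs.1 hgΓ) (Γ.inv_mem hs.1)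
    rcases zpow_freePair_or_pow_eq hσ hX hδ hd hgΓ hsg hgl (hgl.conj s) hl with
      ⟨i, j, hi, hj, hfree⟩ | ⟨k, hk, h⟩
    · refine (hno ⟨_, Γ.zpow_mem hgΓ i, _, Γ.zpow_mem hsg j, hfree, ?_, ?_⟩).elim
      · have := dist_zpow_apply_le_two_mul g x hi
        push_cast at hgx ⊢
        nlinarith
      · have h1 := dist_zpow_apply_le_two_mul (s * g * s⁻¹) x hj
        have h2 := dist_mul_apply_le (s * g) s⁻¹ x
        have h3 := dist_mul_apply_le s g x
        have h4 := hs.2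
        rw [dist_inv_apply] at h2
        push_cast at hgx ⊢
        nlinarith
    · exact ⟨k, hk, by rwa [conj_pow] at h⟩
  choose! k hk0 hk using hpow
  have hSfin : S.Finite := hd x R
  set K : ℕ := ∏ s ∈ hSfin.toFinset, k s with hK
  have hK0 : 0 < K := Finset.prod_pos fun s hs => hk0 s (hSfin.mem_toFinset.1 hs)
  refine isVirtuallyNilpotent_of_forall_conj_eq hX hδ hd (Γ.pow_mem hgΓ K) (hgl.pow hK0.ne')
    ?_ hSΓ fun s hs => ?_
  · have : (1:ℝ) ≤ K := by exact_mod_cast hK0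
    nlinarith
  · obtain ⟨c, hc⟩ : k s ∣ K := Finset.dvd_prod_of_mem k (hSfin.mem_toFinset.2 hs)
    rw [hc, pow_mul, ← conj_pow]
    rcases hk s hs with h | h
    · left; rw [h]
    · right; rw [h, inv_pow]


/-- The points of the orbit `Γ x` at distance at most `R` from `x`. -/
def orbitBall {X : Type*} [MetricSpace X] (Γ : Subgroup (X ≃ᵢ X)) (x : X) (R : ℝ) : Set X :=
  {y : X | ∃ g ∈ Γ, y = g x ∧ dist x y ≤ R}

section Orbits

variable {X : Type*} [MetricSpace X] {Γ : Subgroup (X ≃ᵢ X)}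

theorem orbitBall_finite (hΓ : IsDiscreteSubgroup Γ) (x : X) (R : ℝ) :
    (orbitBall Γ x R).Finite := by
  refine ((hΓ x R).image fun g => g x).subset ?_
  rintro y ⟨g, hg, rfl, hd⟩
  exact ⟨g, ⟨hg, hd⟩, rfl⟩

theorem orbitBall_ncard_pos (hΓ : IsDiscreteSubgroup Γ) (x : X) {R : ℝ} (hR : 0 ≤ R) :
    0 < (orbitBall Γ x R).ncard :=
  (Set.ncard_pos (orbitBall_finite hΓ x R)).2
    ⟨x, 1, Γ.one_mem, rfl, by rwa [dist_self]⟩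

theorem exists_orbitBall_ncard_le {σ : X → X → ℝ → X} (hσ : IsGCB σ) {P₀ r₀ : ℝ}
    (hr₀ : 0 < r₀) (hp : IsPacked X P₀ r₀) (hΓ : IsDiscreteSubgroup Γ) (x : X) :
    ∃ K : ℕ, 0 < K ∧ ∀ R : ℝ,
      ((orbitBall Γ x R).ncard : ℝ) ≤ K * (max P₀ 1) ^ (⌈R / r₀⌉₊ + 1) := by
  classical
  refine ⟨(orbitBall Γ x (2 * r₀)).ncard, orbitBall_ncard_pos hΓ x (by positivity), fun R => ?_⟩
  set K := (orbitBall Γ x (2 * r₀)).ncard with hKdef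
  have hsub : orbitBall Γ x R ⊆ closedBall x R := by
    rintro y ⟨g, -, -, hd⟩
    rwa [mem_closedBall, dist_comm]
  obtain ⟨N, hN, hNs, hNet⟩ := exists_net_of_card_le (A := orbitBall Γ x R) (s := 2 * r₀)
    (by positivity) (K := ⌊(max P₀ 1) ^ (⌈R / r₀⌉₊ + 1)⌋₊)
    (fun S h1 h2 => Nat.le_floor (card_le_of_separated hσ hr₀ hp x R S (h1.trans hsub) h2))
  have hcard := card_le_of_separated hσ hr₀ hp x R N (hN.trans hsub) hNs
  choose! c hcN hcd using hNet
  set T := (orbitBall_finite hΓ x R).toFinset with hT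
  have hTc : (orbitBall Γ x R).ncard = T.card :=
    Set.ncard_eq_toFinset_card _ (orbitBall_finite hΓ x R)
  have hmaps : Set.MapsTo c (T : Set X) (N : Set X) := fun y hy => hcN y (by simpa [hT] using hy)
  have hfib : ∀ t ∈ N, (T.filter fun y => c y = t).card ≤ K := by
    intro t ht
    obtain ⟨h, hh, rfl, -⟩ := hN ht
    rw [← Set.ncard_coe_finset, hKdef,
      ← Set.ncard_image_of_injective (orbitBall Γ x (2 * r₀)) h.injective]
    refine Set.ncard_le_ncard ?_ ((orbitBall_finite hΓ x _).image _)
    intro y hy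
    simp only [Finset.coe_filter, Set.mem_ofPred_eq] at hy
    have hyO : y ∈ orbitBall Γ x R := by simpa [hT] using hy.1
    have hd := hcd y hyO
    rw [hy.2] at hd
    obtain ⟨g, hg, rfl, -⟩ := hyO
    refine ⟨(h⁻¹ * g) x, ⟨h⁻¹ * g, Γ.mul_mem (Γ.inv_mem hh) hg, rfl, ?_⟩, ?_⟩
    · rw [← h.isometry.dist_eq, dist_comm]
      change dist (h (h.symm (g x))) (h x) ≤ _
      rwa [h.apply_symm_apply]
    · exact h.apply_symm_apply (g x)
  have : T.card ≤ N.card * K := by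
    rw [Finset.card_eq_sum_card_fiberwise hmaps]
    calc _ ≤ ∑ _t ∈ N, K := Finset.sum_le_sum hfib
      _ = N.card * K := by simp
  rw [hTc]
  calc (T.card : ℝ) ≤ N.card * K := by exact_mod_cast this
    _ ≤ _ := by rw [mul_comm]; gcongr

/-- The logarithmic growth of orbits is bounded in terms of the packing constants. -/
theorem eventually_log_orbitBall_le {σ : X → X → ℝ → X} (hσ : IsGCB σ) {P₀ r₀ : ℝ}
    (hr₀ : 0 < r₀) (hp : IsPacked X P₀ r₀) (hΓ : IsDiscreteSubgroup Γ) (x : X) :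
    ∀ᶠ R : ℝ in atTop,
      Real.log ((orbitBall Γ x R).ncard : ℝ) / R ≤ Real.log (max P₀ 1) / r₀ + 1 := by
  obtain ⟨K, hK, hle⟩ := exists_orbitBall_ncard_le hσ hr₀ hp hΓ x
  set P := max P₀ 1 with hP
  have hP1 : 1 ≤ P := le_max_right _ _
  have hlP : 0 ≤ Real.log P := Real.log_nonneg hP1
  filter_upwards [eventually_ge_atTop (Real.log K + 2 * Real.log P), eventually_gt_atTop 0]
    with R h1 h2
  rw [div_le_iff₀ h2]
  have hpos : (0:ℝ) < (orbitBall Γ x R).ncard := by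
    exact_mod_cast orbitBall_ncard_pos hΓ x h2.le
  have hK' : (0:ℝ) < K := by exact_mod_cast hK
  have h3 := Real.log_le_log hpos (hle R)
  rw [Real.log_mul hK'.ne' (by positivity), Real.log_pow] at h3
  have h4 : ((⌈R / r₀⌉₊ + 1 : ℕ) : ℝ) ≤ R / r₀ + 2 := by
    have := Nat.ceil_lt_add_one (a := R / r₀) (by positivity)
    push_cast; linarith
  have h5 := mul_le_mul_of_nonneg_right h4 hlP
  have h6 : (Real.log P / r₀ + 1) * R = R / r₀ * Real.log P + R := by field_simp
  rw [h6]; nlinarith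

theorem card_le_of_orbitBall (hΓ : IsDiscreteSubgroup Γ) (x : X) {R : ℝ}
    (W : Finset (X ≃ᵢ X)) (hW : ∀ w ∈ W, w ∈ Γ ∧ dist x (w x) ≤ R) :
    W.card ≤ {g : X ≃ᵢ X | g ∈ Γ ∧ dist x (g x) ≤ 0}.ncard * (orbitBall Γ x R).ncard := by
  classical
  refine (Finset.card_le_mul_card_image (f := fun w : X ≃ᵢ X => w x) W
    {g : X ≃ᵢ X | g ∈ Γ ∧ dist x (g x) ≤ 0}.ncard ?_).trans ?_
  · intro y hy
    obtain ⟨w₀, hw₀, rfl⟩ := Finset.mem_image.1 hy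
    rw [← Set.ncard_coe_finset]
    rw [← Set.ncard_image_of_injective _ (mul_right_injective w₀⁻¹)]
    refine Set.ncard_le_ncard ?_ (hΓ x 0)
    rintro _ ⟨w, hw, rfl⟩
    simp only [Finset.coe_filter, Set.mem_ofPred_eq] at hw
    refine ⟨Γ.mul_mem (Γ.inv_mem (hW _ hw₀).1) (hW _ hw.1).1, ?_⟩
    change dist x (w₀.symm (w x)) ≤ 0
    rw [hw.2, w₀.symm_apply_apply, dist_self]
  · gcongr
    rw [← Set.ncard_coe_finset]
    refine Set.ncard_le_ncard ?_ (orbitBall_finite hΓ x R)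
    intro y hy
    obtain ⟨w, hw, rfl⟩ := Finset.mem_image.1 hy
    exact ⟨w, (hW w hw).1, rfl, (hW w hw).2⟩

/-- A free pair generates `2 ^ n` distinct positive words of length `n`. -/
theorem FreePair.exists_words {u v : X ≃ᵢ X} (h : FreePair u v) (hu : u ∈ Γ) (hv : v ∈ Γ)
    {x : X} {D : ℝ} (hdu : dist x (u x) ≤ D) (hdv : dist x (v x) ≤ D) (n : ℕ) :
    ∃ W : Finset (X ≃ᵢ X), W.card = 2 ^ n ∧ ∀ w ∈ W, w ∈ Γ ∧ dist x (w x) ≤ n * D := by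
  classical
  obtain ⟨Y, ⟨z, hz⟩, hYu, hYv, hne⟩ := h
  suffices H : ∃ W : Finset (X ≃ᵢ X), W.card = 2 ^ n ∧
      ∀ w ∈ W, w ∈ Γ ∧ w z ∈ Y ∧ dist x (w x) ≤ n * D by
    obtain ⟨W, h1, h2⟩ := H
    exact ⟨W, h1, fun w hw => ⟨(h2 w hw).1, (h2 w hw).2.2⟩⟩
  induction n with
  | zero =>
    refine ⟨{1}, by simp, fun w hw => ?_⟩
    rw [Finset.mem_singleton.1 hw]
    refine ⟨Γ.one_mem, hz, ?_⟩
    change dist x x ≤ _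
    simp
  | succ n ih =>
    obtain ⟨W, h1, h2⟩ := ih
    refine ⟨W.image (u * ·) ∪ W.image (v * ·), ?_, ?_⟩
    · rw [Finset.card_union_of_disjoint, Finset.card_image_of_injective _ (mul_right_injective u),
        Finset.card_image_of_injective _ (mul_right_injective v), h1]
      · ring
      · rw [Finset.disjoint_left]
        intro w hw hw'
        obtain ⟨a, ha, rfl⟩ := Finset.mem_image.1 hw
        obtain ⟨b, hb, hab⟩ := Finset.mem_image.1 hw'
        refine hne (a z) (h2 a ha).2.1 (b z) (h2 b hb).2.1 ?_
        exact (DFunLike.congr_fun hab z).symm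
    · intro w hw
      push_cast
      rcases Finset.mem_union.1 hw with hw | hw <;> obtain ⟨a, ha, rfl⟩ := Finset.mem_image.1 hw
      · refine ⟨Γ.mul_mem hu (h2 a ha).1, hYu _ (h2 a ha).2.1, ?_⟩
        have := dist_mul_apply_le u a x
        linarith [(h2 a ha).2.2]
      · refine ⟨Γ.mul_mem hv (h2 a ha).1, hYv _ (h2 a ha).2.1, ?_⟩
        have := dist_mul_apply_le v a x
        linarith [(h2 a ha).2.2]

/-- The exponential growth rate of orbits is at least `log 2 / D` in presence of a free pair
with displacement at most `D` at some point. -/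
theorem FreePair.log_two_div_le_limsup {σ : X → X → ℝ → X} (hσ : IsGCB σ) {P₀ r₀ : ℝ}
    (hr₀ : 0 < r₀) (hp : IsPacked X P₀ r₀) (hΓ : IsDiscreteSubgroup Γ) {u v : X ≃ᵢ X}
    (h : FreePair u v) (hu : u ∈ Γ) (hv : v ∈ Γ) {x₀ : X} {D : ℝ} (hD : 0 < D)
    (hdu : dist x₀ (u x₀) ≤ D) (hdv : dist x₀ (v x₀) ≤ D) (x : X) :
    Real.log 2 / D ≤
      limsup (fun R : ℝ => Real.log ((orbitBall Γ x R).ncard : ℝ) / R) atTop := by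
  refine le_of_forall_lt fun c hc => ?_
  obtain ⟨c', hcc', hc'⟩ := exists_between hc
  refine hcc'.trans_le ?_
  refine le_limsup_of_frequently_le ?_
    ⟨_, eventually_map.2 (eventually_log_orbitBall_le hσ hr₀ hp hΓ x)⟩
  set M := {g : X ≃ᵢ X | g ∈ Γ ∧ dist x (g x) ≤ 0}.ncard with hM
  set a := dist x x₀ with ha
  have htend : Tendsto (fun n : ℕ => (n : ℝ) * D + 2 * a) atTop atTop :=
    tendsto_atTop_add_const_right _ _ (tendsto_natCast_atTop_atTop.atTop_mul_const hD)
  refine htend.frequently (Eventually.frequently ?_)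
  have hpos : 0 < Real.log 2 - c' * D := by
    rw [lt_div_iff₀ hD] at hc'; linarith
  have htend' : Tendsto (fun n : ℕ => (n : ℝ) * (Real.log 2 - c' * D)) atTop atTop :=
    tendsto_natCast_atTop_atTop.atTop_mul_const hpos
  filter_upwards [htend'.eventually_ge_atTop (2 * a * c' + Real.log M),
    htend.eventually_gt_atTop 0] with n h1 h2
  rw [le_div_iff₀ h2]
  obtain ⟨W, hWc, hW⟩ := h.exists_words hu hv hdu hdv n
  have hle := card_le_of_orbitBall hΓ x (R := n * D + 2 * a) W (fun w hw => by
    refine ⟨(hW w hw).1, ?_⟩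
    have e1 := dist_triangle x x₀ (w x)
    have e2 := dist_triangle x₀ (w x₀) (w x)
    have e3 := w.isometry.dist_eq x₀ x
    rw [dist_comm x₀ x] at e3
    linarith [(hW w hw).2])
  rw [hWc, ← hM] at hle
  have hO : (0:ℝ) < (orbitBall Γ x (n * D + 2 * a)).ncard := by
    exact_mod_cast orbitBall_ncard_pos hΓ x h2.le
  have hMpos : 0 < M := by
    rcases Nat.eq_zero_or_pos M with h0 | h0
    · rw [h0, zero_mul] at hle
      have := pow_pos (two_pos (α := ℕ)) n
      omega
    · exact h0
  have hM' : (0:ℝ) < M := by exact_mod_cast hMpos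
  have hlog : Real.log ((2:ℝ) ^ n) ≤ Real.log (M * (orbitBall Γ x (n * D + 2 * a)).ncard) :=
    Real.log_le_log (by positivity) (by exact_mod_cast hle)
  rw [Real.log_pow, Real.log_mul hM'.ne' hO.ne'] at hlog
  linarith

theorem limsup_log_orbitBall_le {σ : X → X → ℝ → X} (hσ : IsGCB σ) {P₀ r₀ : ℝ}
    (hr₀ : 0 < r₀) (hp : IsPacked X P₀ r₀) (hΓ : IsDiscreteSubgroup Γ) (x : X) :
    limsup (fun R : ℝ => Real.log ((orbitBall Γ x R).ncard : ℝ) / R) atTop ≤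
      Real.log (max P₀ 1) / r₀ + 1 := by
  refine limsup_le_of_le ?_ (eventually_log_orbitBall_le hσ hr₀ hp hΓ x)
  refine IsCoboundedUnder.of_frequently_ge (a := 0) (Eventually.frequently ?_)
  filter_upwards [eventually_ge_atTop 0] with R hR
  exact div_nonneg (Real.log_natCast_nonneg _) hR

theorem IsNonElementary.bddAbove (hΓ : IsNonElementary Γ) (x : X) :
    BddAbove {r : ℝ | 0 ≤ r ∧ IsVirtuallyNilpotent ↥(almostStabilizer Γ r x)} := by
  obtain ⟨a, b, ha, hb, hab⟩ := hΓ
  refine ⟨max (dist x (a x)) (dist x (b x)), fun r hr => ?_⟩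
  by_contra! hlt
  refine hab (IsVirtuallyNilpotent.of_le hr.2 ?_)
  refine (Subgroup.closure_le _).2 ?_
  rintro g (rfl | rfl)
  · exact Subgroup.subset_closure ⟨ha, (le_max_left _ _).trans hlt.le⟩
  · exact Subgroup.subset_closure ⟨hb, (le_max_right _ _).trans hlt.le⟩

theorem IsNonElementary.nonempty (hΓ : IsNonElementary Γ) : Nonempty X := by
  by_contra hX
  rw [not_nonempty_iff] at hX
  obtain ⟨a, b, -, -, hab⟩ := hΓ
  have : Subsingleton (X ≃ᵢ X) := ⟨fun f g => IsometryEquiv.ext fun x => isEmptyElim x⟩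
  exact hab ⟨⊤, inferInstance, inferInstance⟩

end Orbits

end GCB

/-- **Corollary 1.2(ii)**: the nilradius of a non-elementary discrete action is finite and
positive, and the entropy of the action is bounded below by `C₀ · nilrad(Γ,X)⁻¹`. -/
theorem entropy_lower_bound_via_nilradius
    (P₀ r₀ δ : ℝ) (hP₀ : 0 < P₀) (hr₀ : 0 < r₀) (hδ : 0 < δ) :
    ∃ C₀ : ℝ, 0 < C₀ ∧
      ∀ (X : Type*) [MetricSpace X] [CompleteSpace X] (σ : X → X → ℝ → X),
        IsGCB σ → IsDeltaHyperbolic X δ → IsPacked X P₀ r₀ →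
        ∀ Γ : Subgroup (X ≃ᵢ X), (∀ g ∈ Γ, IsSigmaIsometry σ g) →
          IsDiscreteSubgroup Γ → IsNonElementary Γ →
          (∀ x : X,
            BddAbove {r : ℝ | 0 ≤ r ∧ IsVirtuallyNilpotent ↥(almostStabilizer Γ r x)}) ∧
          0 < sInf (Set.range fun x : X => nilrad Γ x) ∧
          ∀ x : X,
            C₀ / sInf (Set.range fun x : X => nilrad Γ x) ≤
              Filter.limsup (fun R : ℝ =>
                Real.log ((Set.ncard {y : X | ∃ g ∈ Γ, y = g x ∧ dist x y ≤ R} : ℕ) : ℝ) / R)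
                Filter.atTop := by
  obtain ⟨Φ, hΦ⟩ := exists_hasNetBound P₀ r₀ hr₀
  obtain ⟨N, hN, hfree⟩ := GCB.exists_freePair Φ hδ
  have hN' : (0:ℝ) < N := by exact_mod_cast hN
  have hl2 : 0 < Real.log 2 := Real.log_pos one_lt_two
  refine ⟨Real.log 2 / N, by positivity, ?_⟩
  intro X _ _ σ hσ hX hp Γ hΓσ hΓ hne
  have hbdd := GCB.IsNonElementary.bddAbove hne
  have key : ∀ (x₀ : X) (R : ℝ), 0 < R → ¬ IsVirtuallyNilpotent (almostStabilizer Γ R x₀) →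
      ∀ x : X, Real.log 2 / N ≤
        limsup (fun R : ℝ => Real.log ((GCB.orbitBall Γ x R).ncard : ℝ) / R) atTop * R := by
    intro x₀ R hR hnv x
    obtain ⟨u, hu, v, hv, huv, hdu, hdv⟩ :=
      hfree X σ hσ hX (hΦ X σ hσ hp) Γ hΓσ hΓ x₀ R hR.le hnv
    have := huv.log_two_div_le_limsup hσ hr₀ hp hΓ hu hv (by positivity : 0 < N * R) hdu hdv x
    rwa [← div_div, div_le_iff₀ hR] at this
  obtain ⟨x₁⟩ := GCB.IsNonElementary.nonempty hne
  have : Nonempty X := ⟨x₁⟩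
  set E := Real.log (max P₀ 1) / r₀ + 1 with hE
  have hE0 : 0 < E := by
    have := Real.log_nonneg (le_max_right P₀ 1)
    positivity
  have hlow : ∀ x : X, Real.log 2 / N / (2 * E) ≤ nilrad Γ x := by
    intro x
    refine le_csSup (hbdd x) ⟨by positivity, ?_⟩
    by_contra hnv
    have h1 := key x _ (by positivity) hnv x
    have h2 := GCB.limsup_log_orbitBall_le hσ hr₀ hp hΓ x
    have h3 := h1.trans (mul_le_mul_of_nonneg_right h2 (by positivity))
    rw [← hE] at h3
    have h4 : E * (Real.log 2 / N / (2 * E)) = Real.log 2 / N / 2 := by field_simp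
    have : 0 < Real.log 2 / N := by positivity
    linarith
  have hν : 0 < sInf (Set.range fun x : X => nilrad Γ x) :=
    lt_of_lt_of_le (by positivity : 0 < Real.log 2 / N / (2 * E))
      (le_csInf (Set.range_nonempty _) (by rintro _ ⟨x, rfl⟩; exact hlow x))
  refine ⟨hbdd, hν, fun x => ?_⟩
  rw [div_le_iff₀ hν]
  set ν := sInf (Set.range fun x : X => nilrad Γ x) with hνdef
  change _ ≤ limsup (fun R : ℝ => Real.log ((GCB.orbitBall Γ x R).ncard : ℝ) / R) atTop * ν
  set L := limsup (fun R : ℝ => Real.log ((GCB.orbitBall Γ x R).ncard : ℝ) / R) atTop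
  have hRL : ∀ R > ν, Real.log 2 / N ≤ L * R := by
    intro R hR
    obtain ⟨_, ⟨x₀, rfl⟩, hx₀⟩ := exists_lt_of_csInf_lt (Set.range_nonempty _) hR
    refine key x₀ R (hν.trans hR) (fun hv => ?_) x
    exact absurd (le_csSup (hbdd x₀) ⟨(hν.trans hR).le, hv⟩) (not_le.2 hx₀)
  refine ge_of_tendsto (f := fun R => L * R) (x := nhdsWithin ν (Set.Ioi ν)) ?_
    (by filter_upwards [self_mem_nhdsWithin] with R hR using hRL R hR)
  exact ((continuous_const.mul continuous_id).tendsto ν).mono_left nhdsWithin_le_nhds
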